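/- Let d ≥ 3 and ε ∈ (0,1), and let B = B(0,N^{1−ε/2}) ⊂ T. There is a constant c = c(d,ε) > 0 such that for all sufficiently large N (depending on d,ε): sup_{x,y ∈ T∖B} | P_x[ Y_{t_*} = y | H_B > t_* ] − σ(y) | ≤ e^{−c (log N)²}, where t_* = (N log N)² and σ is the quasistationary distribution on T∖B. -/

import Mathlib

open MeasureTheory Filter Classical
open scoped ENNReal NNReal

noncomputable section

namespace Frag

/-! ### Graph-theoretic basics -/

/-- Two vertices of `Fin d → R` are adjacent if they differ in exactly one
coordinate, by `±1` (Euclidean distance one). -/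
def adj {d : ℕ} {R : Type*} [AddGroupWithOne R] (x y : Fin d → R) : Prop :=
  x ≠ y ∧ ∃ i : Fin d, (y i = x i + 1 ∨ x i = y i + 1) ∧ ∀ j : Fin d, j ≠ i → x j = y j

/-- The discrete torus `(ℤ/Nℤ)^d`. -/
abbrev Torus (d N : ℕ) := Fin d → ZMod N

/-- The lattice `ℤ^d`. -/
abbrev Lat (d : ℕ) := Fin d → ℤ

instance (n : ℕ) : MeasurableSpace (ZMod n) := ⊤

/-- The `ℓ∞`-distance on the torus. -/
def torusDist {d N : ℕ} (x y : Torus d N) : ℕ :=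
  Finset.univ.sup fun i : Fin d => min (x i - y i).val (y i - x i).val

/-- The `ℓ∞`-distance on the lattice. -/
def latDist {d : ℕ} (x y : Lat d) : ℕ :=
  Finset.univ.sup fun i : Fin d => (x i - y i).natAbs

/-- Closed `ℓ∞`-ball in the torus. -/
def torusBall {d N : ℕ} (x : Torus d N) (r : ℝ) : Set (Torus d N) :=
  {y | (torusDist x y : ℝ) ≤ r}

/-- Closed `ℓ∞`-ball in the lattice. -/
def latBall {d : ℕ} (x : Lat d) (r : ℝ) : Set (Lat d) :=
  {y | (latDist x y : ℝ) ≤ r}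

/-- `x` and `y` are connected by a nearest-neighbour path staying in `S`. -/
def connectedIn {α : Type*} (rel : α → α → Prop) (S : Set α) (x y : α) : Prop :=
  ∃ (n : ℕ) (p : ℕ → α), p 0 = x ∧ p n = y ∧ (∀ k, k ≤ n → p k ∈ S) ∧
    ∀ k, k < n → rel (p k) (p (k + 1))

/-- The connected component of `x` inside `S`. -/
def compOf {α : Type*} (rel : α → α → Prop) (S : Set α) (x : α) : Set α :=
  {y | connectedIn rel S x y}

/-- `S` is a connected set. -/
def IsConnSet {α : Type*} (rel : α → α → Prop) (S : Set α) : Prop :=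
  ∀ x ∈ S, ∀ y ∈ S, connectedIn rel S x y

/-- External vertex boundary. -/
def extBdry {α : Type*} (rel : α → α → Prop) (S : Set α) : Set α :=
  {y | y ∉ S ∧ ∃ x ∈ S, rel x y}

/-- Internal vertex boundary. -/
def intBdry {α : Type*} (rel : α → α → Prop) (S : Set α) : Set α :=
  {x | x ∈ S ∧ ∃ y, y ∉ S ∧ rel x y}

/-- The cardinality of the largest connected component of `S`. -/
def maxCompSize {α : Type*} (rel : α → α → Prop) (S : Set α) : ℕ :=
  sSup {n | ∃ x ∈ S, n = (compOf rel S x).ncard}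

/-- The diameter of a set with respect to a distance. -/
def diamOf {α : Type*} (dist : α → α → ℕ) (S : Set α) : ℕ :=
  sSup {n | ∃ x ∈ S, ∃ y ∈ S, n = dist x y}

/-- The canonical graph isomorphism `φ` from `B(0, N/4) ⊆ (ℤ/Nℤ)^d` onto
`B(0, N/4) ⊆ ℤ^d`, given by the signed representative of each coordinate. -/
def torusToLat {d N : ℕ} (x : Torus d N) : Lat d :=
  fun i => if ((x i).val : ℝ) ≤ (N : ℝ) / 2 then ((x i).val : ℤ) else ((x i).val : ℤ) - (N : ℤ)

/-! ### Discrete-time simple random walk -/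

/-- One-step transition probability of the simple random walk. -/
def srwStep {d : ℕ} {R : Type*} [AddGroupWithOne R] (x y : Fin d → R) : ℝ≥0∞ :=
  if adj x y then ((2 * d : ℕ) : ℝ≥0∞)⁻¹ else 0

/-- `μ` is the law on path space of the discrete-time simple random walk with
initial distribution `init`, characterized by its cylinder probabilities. -/
def IsWalkLaw {d : ℕ} {R : Type*} [AddGroupWithOne R] [MeasurableSpace R]
    (μ : Measure (ℕ → (Fin d → R))) (init : (Fin d → R) → ℝ≥0∞) : Prop :=
  IsProbabilityMeasure μ ∧
  ∀ (n : ℕ) (w : ℕ → (Fin d → R)),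
    μ {ω | ∀ k, k ≤ n → ω k = w k} =
      init (w 0) * ∏ k ∈ Finset.range n, srwStep (w k) (w (k + 1))

/-- The uniform initial distribution on the torus. -/
def unifInit (d N : ℕ) : Torus d N → ℝ≥0∞ := fun _ => ((N : ℝ≥0∞) ^ d)⁻¹

/-- The initial distribution concentrated at `x`. -/
def pointInit {α : Type*} (x : α) : α → ℝ≥0∞ := fun y => if y = x then 1 else 0

/-- The set of sites visited in the first `t` steps. -/
def visited {α : Type*} (t : ℕ) (ω : ℕ → α) : Set α := {v | ∃ k, k ≤ t ∧ ω k = v}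

/-! ### Capacity and random interlacements on `ℤ^d` -/

/-- The event that the walk never returns to `V` after time `0`. -/
def escEvent {d : ℕ} (V : Set (Lat d)) : Set (ℕ → Lat d) :=
  {w | ∀ n, 1 ≤ n → w n ∉ V}

/-- `r` is the (simple random walk) capacity of `V ⊆ ℤ^d`:
`r = Σ_{x ∈ V} P_x[H̃_V = ∞]`. -/
def IsCap (d : ℕ) (V : Set (Lat d)) (r : ℝ) : Prop :=
  ∃ μ : Lat d → Measure (ℕ → Lat d),
    (∀ x, IsWalkLaw (μ x) (pointInit x)) ∧
    r = ∑ᶠ x ∈ V, ((μ x) (escEvent V)).toReal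

/-- `I` is a random interlacement at level `u` on the probability space `(Ω, P)`:
for every finite `V ⊆ ℤ^d`, `P[I ∩ V = ∅] = exp (−u · cap V)`. -/
def IsInterlacement (d : ℕ) (u : ℝ) {Ω : Type*} [MeasurableSpace Ω]
    (P : Measure Ω) (I : Ω → Set (Lat d)) : Prop :=
  IsProbabilityMeasure P ∧
  (∀ x : Lat d, MeasurableSet {ω | x ∈ I ω}) ∧
  ∀ V : Set (Lat d), V.Finite → ∀ r : ℝ, IsCap d V r →
    P {ω | ∀ x ∈ V, x ∉ I ω} = ENNReal.ofReal (Real.exp (-u * r))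

/-- `e = η(u)`, the probability that the origin lies in an infinite component of
the vacant set `V^u = ℤ^d ∖ I^u` of a random interlacement at level `u`. -/
def IsEta (d : ℕ) (u e : ℝ) : Prop :=
  ∃ (Ω : Type) (_ : MeasurableSpace Ω) (P : Measure Ω) (I : Ω → Set (Lat d)),
    IsInterlacement d u P I ∧
    e = (P {ω | (compOf adj ((I ω)ᶜ) (0 : Lat d)).Infinite}).toReal

/-- The critical level `u_* = inf {u ≥ 0 : η(u) = 0}`. -/
def uStar (d : ℕ) : ℝ := sInf {u | 0 ≤ u ∧ IsEta d u 0}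

/-- The probability of an event `E` about a random interlacement at level `u`. -/
def intProb (d : ℕ) (u : ℝ) (E : Set (Lat d) → Prop) : ℝ :=
  sSup {p | ∃ (Ω : Type) (_ : MeasurableSpace Ω) (P : Measure Ω) (I : Ω → Set (Lat d)),
    IsInterlacement d u P I ∧ p = (P {ω | E (I ω)}).toReal}

/-- The event that `B(0,L)` is connected to the external boundary of `B(0,2L)`
by a nearest-neighbour path in `S`. -/
def connAcross (d L : ℕ) (S : Set (Lat d)) : Prop :=
  ∃ x ∈ latBall (0 : Lat d) (L : ℝ), ∃ y ∈ extBdry adj (latBall (0 : Lat d) (2 * (L : ℝ))),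
    connectedIn adj S x y

/-- The critical level `u_** = inf {u ≥ 0 : α(u) > 0}`. -/
def uStarStar (d : ℕ) : ℝ :=
  sInf {u | 0 ≤ u ∧ ∃ a : ℝ, 0 < a ∧
    Tendsto (fun L : ℕ => (L : ℝ) ^ a * intProb d u fun I => connAcross d L Iᶜ)
      atTop (nhds 0)}

/-- `u` is a strongly supercritical level for random interlacements on `ℤ^d`. -/
def StronglySupercritical (d : ℕ) (u : ℝ) : Prop :=
  ∃ μ : ℝ, 0 < μ ∧
  ∃ (Ω : Type) (_ : MeasurableSpace Ω) (P : Measure Ω) (I : ℝ → Ω → Set (Lat d)),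
    (∀ v : ℝ, 0 ≤ v → IsInterlacement d v P (I v)) ∧
    (∀ v v' : ℝ, v ≤ v' → ∀ ω, I v ω ⊆ I v' ω) ∧
    ∃ N₀ : ℕ, ∀ N : ℕ, N₀ ≤ N →
      (1 - Real.exp (-(N : ℝ) ^ μ) ≤
        (P {ω | ∃ x ∈ latBall (0 : Lat d) (N : ℝ),
          (compOf adj ((I (u * (1 + μ)) ω)ᶜ) x).Infinite}).toReal) ∧
      (1 - Real.exp (-(N : ℝ) ^ μ) ≤
        (P {ω | ∀ S₁ S₂ : Set (Lat d),
            S₁ ⊆ (I (u * (1 - μ)) ω)ᶜ ∩ latBall 0 (N : ℝ) →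
            S₂ ⊆ (I (u * (1 - μ)) ω)ᶜ ∩ latBall 0 (N : ℝ) →
            IsConnSet adj S₁ → IsConnSet adj S₂ →
            (N : ℝ) / 8 ≤ (diamOf latDist S₁ : ℝ) →
            (N : ℝ) / 8 ≤ (diamOf latDist S₂ : ℝ) →
            ∃ x ∈ S₁, ∃ y ∈ S₂,
              connectedIn adj ((I (u * (1 + μ)) ω)ᶜ ∩ latBall 0 (2 * (N : ℝ))) x y}).toReal)

/-! ### Continuous-time walk -/

/-- Sample space for the continuous-time walk: a discrete path together with
the i.i.d. exponential interarrival gaps of the driving Poisson process. -/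
abbrev CTPath (d N : ℕ) := (ℕ → Torus d N) × (ℕ → ℝ)

/-- The number of jumps performed up to time `t`. -/
def nJumps (g : ℕ → ℝ) (t : ℝ) : ℕ := sSup {n | ∑ k ∈ Finset.range n, g k ≤ t}

/-- The position of the continuous-time walk at time `t`. -/
def ctPos {d N : ℕ} (ω : CTPath d N) (t : ℝ) : Torus d N := ω.1 (nJumps ω.2 t)

/-- `ν` is the law of an i.i.d. sequence of exponential random variables of
parameter `1`, characterized by its joint survival function. -/
def IsIIDExp (ν : Measure (ℕ → ℝ)) : Prop :=
  IsProbabilityMeasure ν ∧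
  ∀ (n : ℕ) (s : ℕ → ℝ), (∀ k, 0 ≤ s k) →
    ν {g | ∀ k, k ≤ n → s k < g k} =
      ENNReal.ofReal (Real.exp (-(∑ k ∈ Finset.range (n + 1), s k)))

/-- `P` is the law of the continuous-time simple random walk `Y_t = X_{N_t}`
with initial distribution `init`. -/
def IsCTWalk {d N : ℕ} (P : Measure (CTPath d N)) (init : Torus d N → ℝ≥0∞) : Prop :=
  ∃ (μ : Measure (ℕ → Torus d N)) (ν : Measure (ℕ → ℝ)),
    IsWalkLaw μ init ∧ IsIIDExp ν ∧ P = μ.prod ν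

/-- The entrance time `H_V = inf {t ≥ 0 : Y_t ∈ V}`. -/
def hitT {d N : ℕ} (V : Set (Torus d N)) (ω : CTPath d N) : ℝ :=
  sInf {t | 0 ≤ t ∧ ctPos ω t ∈ V}

/-- The entrance time to `V` after time `s`. -/
def hitTAfter {d N : ℕ} (V : Set (Torus d N)) (ω : CTPath d N) (s : ℝ) : ℝ :=
  sInf {t | s ≤ t ∧ ctPos ω t ∈ V}

/-- The exit time `T_V = inf {t ≥ 0 : Y_t ∉ V}`. -/
def exitT {d N : ℕ} (V : Set (Torus d N)) (ω : CTPath d N) : ℝ :=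
  sInf {t | 0 ≤ t ∧ ctPos ω t ∉ V}

/-- The regeneration time `t_* = (N log N)^2`. -/
def tstar (N : ℕ) : ℝ := ((N : ℝ) * Real.log N) ^ 2

/-- The first time `t ≥ s + t_*` such that the walk has avoided `B` during the
whole interval `[t − t_*, t]`. -/
def uEndAfter {d N : ℕ} (B : Set (Torus d N)) (ω : CTPath d N) (s : ℝ) : ℝ :=
  sInf {t | s + tstar N ≤ t ∧ ∀ r, t - tstar N ≤ r → r ≤ t → ctPos ω r ∉ B}

/-- The successive excursion times `(R_k, U_k)` between `A` and (long absences
from) `B`, with the convention `(R_0, U_0) = (0, 0)`. -/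
def excTimes {d N : ℕ} (A B : Set (Torus d N)) (ω : CTPath d N) : ℕ → ℝ × ℝ
  | 0 => (0, 0)
  | k + 1 =>
      let R := hitTAfter A ω (excTimes A B ω k).2
      (R, uEndAfter B ω R)

/-- The range of the continuous-time walk during the time interval `[a, b]`. -/
def ctRange {d N : ℕ} (ω : CTPath d N) (a b : ℝ) : Set (Torus d N) :=
  {v | ∃ t, a ≤ t ∧ t ≤ b ∧ ctPos ω t = v}

/-! ### The killed walk and the quasistationary distribution -/

/-- The action of the substochastic matrix `P^B` (walk killed on `B`) on a
vector `v`. -/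
def killedMul (d N : ℕ) (B : Set (Torus d N)) (v : Torus d N → ℝ) (x : Torus d N) : ℝ :=
  ∑ᶠ y : Torus d N, if y ∉ B ∧ adj x y then v y / (2 * d) else 0

/-- `l` is an eigenvalue of the killed transition matrix `P^B`. -/
def IsKilledEigenvalue (d N : ℕ) (B : Set (Torus d N)) (l : ℝ) : Prop :=
  ∃ v : Torus d N → ℝ, v ≠ 0 ∧ (∀ x ∈ B, v x = 0) ∧
    ∀ x, x ∉ B → killedMul d N B v x = l * v x

/-- `σ` is the quasistationary distribution on `T ∖ B`: the normalized
non-negative principal (Perron–Frobenius) eigenvector of `P^B`. -/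
def IsQSD (d N : ℕ) (B : Set (Torus d N)) (σ : Torus d N → ℝ) : Prop :=
  (∀ x, 0 ≤ σ x) ∧ (∀ x ∈ B, σ x = 0) ∧ (∑ᶠ x, σ x = 1) ∧
  ∃ l : ℝ, (∀ x, x ∉ B → killedMul d N B σ x = l * σ x) ∧
    ∀ l', IsKilledEigenvalue d N B l' → l' ≤ l

/-- The Dirichlet form of the simple random walk on the torus. -/
def dirichlet (d N : ℕ) (g : Torus d N → ℝ) : ℝ :=
  (1 / 2) * ∑ᶠ x : Torus d N, ∑ᶠ y : Torus d N,
    if adj x y then (g x - g y) ^ 2 / (2 * d * (N : ℝ) ^ d) else 0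

end Frag

namespace Frag

/-! ### The driving Poisson process -/

instance isProbabilityMeasure_expMeasure_one :
    IsProbabilityMeasure (ProbabilityTheory.expMeasure 1) :=
  ProbabilityTheory.isProbabilityMeasure_expMeasure one_pos

lemma expMeasure_Ioi (s : ℝ) :
    ProbabilityTheory.expMeasure 1 (Set.Ioi s) = ENNReal.ofReal (Real.exp (-(max s 0))) := by
  have h := ProbabilityTheory.cdf_expMeasure_eq (r := 1) one_pos s
  rw [ProbabilityTheory.cdf_eq_real] at h
  have h2 : (ProbabilityTheory.expMeasure 1).real (Set.Ioi s) = Real.exp (-(max s 0)) := by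
    rw [← Set.compl_Iic, probReal_compl_eq_one_sub measurableSet_Iic, h]
    split_ifs with h0
    · simp [max_eq_left h0]
    · simp [max_eq_right (not_le.mp h0).le]
  rw [← h2, ofReal_measureReal]


lemma IsIIDExp.ae_pos {ν : Measure (ℕ → ℝ)} (hν : IsIIDExp ν) : ∀ᵐ g ∂ν, ∀ k, 0 < g k := by
  have := hν.1
  rw [ae_all_iff]
  intro k
  have h := hν.2 k (fun _ => 0) (fun _ => le_rfl)
  simp only [Finset.sum_const_zero, neg_zero, Real.exp_zero, ENNReal.ofReal_one] at h
  have hm : MeasurableSet {g : ℕ → ℝ | ∀ j, j ≤ k → 0 < g j} := by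
    measurability
  rw [← prob_compl_eq_zero_iff hm] at h
  rw [ae_iff]
  refine measure_mono_null ?_ h
  intro g hg hg'
  exact hg (hg' k le_rfl)

lemma IsIIDExp.map_fin {ν : Measure (ℕ → ℝ)} (hν : IsIIDExp ν) (n : ℕ) :
    ν.map (fun g (i : Fin (n + 1)) => g i) =
      Measure.pi (fun _ => ProbabilityTheory.expMeasure 1) := by
  have := hν.1
  have hmeas : Measurable (fun (g : ℕ → ℝ) (i : Fin (n + 1)) => g i) := by fun_prop
  have : IsProbabilityMeasure (ν.map (fun g (i : Fin (n + 1)) => g i)) :=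
    Measure.isProbabilityMeasure_map hmeas.aemeasurable
  symm
  refine Measure.pi_eq_generateFrom (C := fun _ => Set.range Set.Ioi)
    (fun _ => ((borel_eq_generateFrom_Ioi ℝ).symm.trans (BorelSpace.measurable_eq (α := ℝ)).symm))
    (fun _ => isPiSystem_Ioi) (fun _ => ?_) ?_
  · refine ⟨fun m => Set.Ioi (-(m : ℝ)), fun m => ⟨_, rfl⟩, fun m => measure_lt_top _ _, ?_⟩
    rw [Set.iUnion_eq_univ_iff]
    intro x
    obtain ⟨m, hm⟩ := exists_nat_gt (-x)
    exact ⟨m, by simp only [Set.mem_Ioi]; linarith⟩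
  · intro s hs
    choose a ha using hs
    rw [Measure.map_apply hmeas (MeasurableSet.univ_pi fun i => by
      rw [← ha i]; exact measurableSet_Ioi)]
    set b : ℕ → ℝ := fun k => if h : k < n + 1 then max (a ⟨k, h⟩) 0 else 0 with hb
    have hb0 : ∀ k, 0 ≤ b k := by
      intro k; simp only [hb]; split_ifs <;> simp
    have hbi : ∀ i : Fin (n + 1), b i = max (a i) 0 := fun i => by
      simp only [hb, dif_pos i.2]
    have key := hν.2 n b hb0
    have hae : (fun (g : ℕ → ℝ) (i : Fin (n + 1)) => g i) ⁻¹' Set.univ.pi s =ᵐ[ν]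
        {g : ℕ → ℝ | ∀ k, k ≤ n → b k < g k} := by
      filter_upwards [hν.ae_pos] with g hg
      apply propext
      change (∀ i : Fin (n + 1), i ∈ Set.univ → g i ∈ s i) ↔ ∀ k, k ≤ n → b k < g k
      constructor
      · intro h k hk
        have := h ⟨k, Nat.lt_succ_of_le hk⟩ trivial
        rw [← ha] at this
        have h3 := hbi ⟨k, Nat.lt_succ_of_le hk⟩
        simp only at h3
        rw [h3]
        exact max_lt this (hg k)
      · intro h i _
        have := h i (Nat.le_of_lt_succ i.2)
        rw [hbi] at this
        rw [← ha]
        exact lt_of_le_of_lt (le_max_left _ _) this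
    rw [measure_congr hae, key, Finset.sum_range, ← Finset.sum_neg_distrib, Real.exp_sum,
      ENNReal.ofReal_prod_of_nonneg (fun _ _ => (Real.exp_pos _).le)]
    refine Finset.prod_congr rfl fun i _ => ?_
    rw [← ha, expMeasure_Ioi, hbi]

/-- The probability that a rate-one Poisson process equals `n` at time `t`. -/
def poissonWeight (t : ℝ) (n : ℕ) : ℝ := Real.exp (-t) * (t ^ n / n.factorial)

lemma lintegral_poissonWeight_sub (n : ℕ) (t : ℝ) :
    ∫⁻ s, (if 0 ≤ t - s then ENNReal.ofReal (poissonWeight (t - s) n) else 0)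
      ∂(ProbabilityTheory.expMeasure 1) =
    if 0 ≤ t then ENNReal.ofReal (poissonWeight t (n + 1)) else 0 := by
  have hpdf : ProbabilityTheory.expMeasure 1 =
      volume.withDensity (ProbabilityTheory.exponentialPDF 1) := rfl
  have hmeas : Measurable (ProbabilityTheory.exponentialPDF 1) :=
    (ProbabilityTheory.measurable_exponentialPDFReal 1).ennreal_ofReal
  have hm2 : Measurable fun s : ℝ =>
      (if 0 ≤ t - s then ENNReal.ofReal (poissonWeight (t - s) n) else 0) := by
    refine Measurable.ite (measurableSet_le measurable_const (by fun_prop)) ?_ measurable_const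
    unfold poissonWeight
    fun_prop
  rw [hpdf, lintegral_withDensity_eq_lintegral_mul _ hmeas hm2]
  have hform : ∀ s : ℝ, (ProbabilityTheory.exponentialPDF 1 * fun s : ℝ =>
      (if 0 ≤ t - s then ENNReal.ofReal (poissonWeight (t - s) n) else 0)) s =
      (Set.Icc 0 t).indicator
        (fun s => ENNReal.ofReal (Real.exp (-t) * ((t - s) ^ n / n.factorial))) s := by
    intro s
    simp only [Pi.mul_apply, ProbabilityTheory.exponentialPDF_eq, Set.indicator, Set.mem_Icc]
    by_cases h1 : 0 ≤ s
    · by_cases h2 : s ≤ t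
      · rw [if_pos h1, if_pos (sub_nonneg.mpr h2), if_pos ⟨h1, h2⟩,
          ← ENNReal.ofReal_mul (by positivity)]
        congr 1
        rw [poissonWeight, one_mul, one_mul, ← mul_assoc, ← Real.exp_add]
        congr 2; ring
      · rw [if_neg (fun h => h2 (sub_nonneg.mp h)), mul_zero,
          if_neg (fun h : 0 ≤ s ∧ s ≤ t => h2 h.2)]
    · rw [if_neg h1, ENNReal.ofReal_zero, zero_mul,
        if_neg (fun h : 0 ≤ s ∧ s ≤ t => h1 h.1)]
  rw [lintegral_congr hform, lintegral_indicator measurableSet_Icc]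
  split_ifs with ht
  · have hcont : Continuous fun s : ℝ => Real.exp (-t) * ((t - s) ^ n / n.factorial) := by fun_prop
    rw [← ofReal_integral_eq_lintegral_ofReal]
    · congr 1
      rw [integral_Icc_eq_integral_Ioc, ← intervalIntegral.integral_of_le ht]
      rw [intervalIntegral.integral_const_mul, intervalIntegral.integral_div,
        intervalIntegral.integral_comp_sub_left (fun x => x ^ n) t, integral_pow, poissonWeight,
        Nat.factorial_succ]
      push_cast
      field_simp
      simp
    · exact hcont.integrableOn_Icc
    · rw [Filter.EventuallyLE, ae_restrict_iff' measurableSet_Icc]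
      refine Eventually.of_forall fun s hs => ?_
      have : 0 ≤ t - s := by linarith [hs.2]
      simp only [Pi.zero_apply]
      positivity
  · rw [Set.Icc_eq_empty (by linarith)]; simp

lemma measurableSet_le_and_lt {α : Type*} [MeasurableSpace α] {f h : α → ℝ} (hf : Measurable f)
    (hh : Measurable h) (t : ℝ) : MeasurableSet {a | f a ≤ t ∧ t < h a} := by
  have : {a | f a ≤ t ∧ t < h a} = {a | f a ≤ t} ∩ {a | t < h a} := by ext; simp
  rw [this]
  exact (measurableSet_le hf measurable_const).inter (measurableSet_lt measurable_const hh)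

lemma pi_expMeasure_jumps (n : ℕ) (t : ℝ) :
    Measure.pi (fun _ : Fin (n + 1) => ProbabilityTheory.expMeasure 1)
      {g | ∑ i : Fin n, g i.castSucc ≤ t ∧ t < ∑ i, g i} =
    if 0 ≤ t then ENNReal.ofReal (poissonWeight t n) else 0 := by
  induction n generalizing t with
  | zero =>
    have hset : {g : Fin (0 + 1) → ℝ | ∑ i : Fin 0, g i.castSucc ≤ t ∧ t < ∑ i, g i} =
        Set.univ.pi fun _ => if 0 ≤ t then Set.Ioi t else ∅ := by
      ext g
      split_ifs with h <;> simp [Set.mem_pi, h]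
    rw [hset, Measure.pi_pi]
    split_ifs with h
    · simp [expMeasure_Ioi, max_eq_left h, poissonWeight]
    · simp
  | succ n ih =>
    have hm : MeasurableSet {g : Fin (n + 1 + 1) → ℝ |
        ∑ i : Fin (n + 1), g i.castSucc ≤ t ∧ t < ∑ i, g i} :=
      measurableSet_le_and_lt (by fun_prop) (by fun_prop) t
    have hmp := (measurePreserving_piFinSuccAbove
      (fun _ : Fin (n + 1 + 1) => ProbabilityTheory.expMeasure 1) 0).symm
    rw [← hmp.measure_preimage hm.nullMeasurableSet, Measure.prod_apply (hmp.measurable hm),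
      ← lintegral_poissonWeight_sub]
    refine lintegral_congr fun s => ?_
    rw [← ih (t - s)]
    congr 1
    ext g
    simp only [Set.mem_preimage, Set.mem_ofPred_eq, MeasurableEquiv.piFinSuccAbove_symm_apply]
    rw [Fin.sum_univ_succ, Fin.sum_univ_succ (n := n + 1)]
    simp only [Fin.insertNthEquiv_apply, Fin.insertNth_zero, Fin.castSucc_zero,
      Fin.cons_zero, Fin.cons_succ, ← Fin.succ_castSucc]
    change (s + ∑ i : Fin n, g i.castSucc ≤ t ∧ t < s + ∑ i, g i) ↔ _
    constructor <;> rintro ⟨h1, h2⟩ <;> constructor <;> linarith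

lemma IsIIDExp.measure_jumps {ν : Measure (ℕ → ℝ)} (hν : IsIIDExp ν) (n : ℕ) {t : ℝ}
    (ht : 0 ≤ t) :
    ν {g | ∑ k ∈ Finset.range n, g k ≤ t ∧ t < ∑ k ∈ Finset.range (n + 1), g k} =
      ENNReal.ofReal (poissonWeight t n) := by
  have h := pi_expMeasure_jumps n t
  rw [← hν.map_fin n, if_pos ht, Measure.map_apply (by fun_prop)] at h
  · rw [← h]
    congr 1
    ext g
    simp only [Set.mem_preimage, Set.mem_ofPred_eq, Finset.sum_range, Fin.val_castSucc]
  · exact measurableSet_le_and_lt (by fun_prop) (by fun_prop) t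

lemma hasSum_poissonWeight (t : ℝ) : HasSum (poissonWeight t) 1 := by
  have h := (NormedSpace.expSeries_div_hasSum_exp t).mul_left (Real.exp (-t))
  rw [← Real.exp_eq_exp_ℝ, ← Real.exp_add, neg_add_cancel, Real.exp_zero] at h
  exact h

lemma poissonWeight_nonneg {t : ℝ} (ht : 0 ≤ t) (n : ℕ) : 0 ≤ poissonWeight t n := by
  unfold poissonWeight; positivity

lemma measurableSet_jumps (n : ℕ) (t : ℝ) : MeasurableSet
    {g : ℕ → ℝ | ∑ k ∈ Finset.range n, g k ≤ t ∧ t < ∑ k ∈ Finset.range (n + 1), g k} :=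
  measurableSet_le_and_lt (by fun_prop) (by fun_prop) t

lemma sum_range_mono_of_pos {g : ℕ → ℝ} (hg : ∀ k, 0 < g k) :
    StrictMono fun n => ∑ k ∈ Finset.range n, g k :=
  strictMono_nat_of_lt_succ fun n => by
    rw [Finset.sum_range_succ]; linarith [hg n]

lemma nJumps_eq {g : ℕ → ℝ} (hg : ∀ k, 0 < g k) {t : ℝ} {n : ℕ}
    (h1 : ∑ k ∈ Finset.range n, g k ≤ t) (h2 : t < ∑ k ∈ Finset.range (n + 1), g k) :
    nJumps g t = n := by
  have hset : {m | ∑ k ∈ Finset.range m, g k ≤ t} = Set.Iic n := by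
    ext m
    constructor
    · intro hm
      by_contra hlt
      have := (sum_range_mono_of_pos hg).monotone (Nat.succ_le_of_lt (not_le.mp hlt))
      have hm' : ∑ k ∈ Finset.range m, g k ≤ t := hm
      simp only [Nat.succ_eq_add_one] at this
      linarith
    · intro hm
      exact ((sum_range_mono_of_pos hg).monotone hm).trans h1
  rw [nJumps, hset, csSup_Iic]

lemma nJumps_le {g : ℕ → ℝ} (hg : ∀ k, 0 < g k) {t : ℝ} {n : ℕ}
    (h2 : t < ∑ k ∈ Finset.range (n + 1), g k) : nJumps g t ≤ n := by
  refine csSup_le' fun m hm => ?_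
  by_contra hlt
  have := (sum_range_mono_of_pos hg).monotone (Nat.succ_le_of_lt (not_le.mp hlt))
  have hm' : ∑ k ∈ Finset.range m, g k ≤ t := hm
  simp only [Nat.succ_eq_add_one] at this
  linarith

lemma IsIIDExp.ae_exists_jumps {ν : Measure (ℕ → ℝ)} (hν : IsIIDExp ν) {t : ℝ} (ht : 0 ≤ t) :
    ∀ᵐ g ∂ν, ∃ n, ∑ k ∈ Finset.range n, g k ≤ t ∧ t < ∑ k ∈ Finset.range (n + 1), g k := by
  have := hν.1
  set S : ℕ → Set (ℕ → ℝ) := fun n =>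
    {g | ∑ k ∈ Finset.range n, g k ≤ t ∧ t < ∑ k ∈ Finset.range (n + 1), g k} with hS
  have hmS : ∀ n, MeasurableSet (S n) := fun n => measurableSet_jumps n t
  have hdisj : Pairwise (Function.onFun (AEDisjoint ν) S) := by
    intro i j hij
    refine measure_mono_null (t := {g | ¬ ∀ k, 0 < g k}) ?_ (ae_iff.mp hν.ae_pos)
    rintro g ⟨hi, hj⟩ hg
    exact hij ((nJumps_eq hg hi.1 hi.2).symm.trans (nJumps_eq hg hj.1 hj.2))
  have hU : ν (⋃ n, S n) = 1 := by
    rw [measure_iUnion₀ hdisj fun n => (hmS n).nullMeasurableSet]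
    simp_rw [hS, hν.measure_jumps _ ht]
    rw [← ENNReal.ofReal_tsum_of_nonneg (poissonWeight_nonneg ht) (hasSum_poissonWeight t).summable,
      (hasSum_poissonWeight t).tsum_eq, ENNReal.ofReal_one]
  rw [← prob_compl_eq_zero_iff (MeasurableSet.iUnion hmS)] at hU
  rw [ae_iff]
  convert hU using 2
  ext g
  simp [hS]

/-! ### Neighbours on the torus and the averaging operator -/

/-- The average of `f` over the `2d` neighbours of `x`. -/
def avg {d : ℕ} {R : Type*} [AddGroupWithOne R] (f : (Fin d → R) → ℝ) (x : Fin d → R) : ℝ :=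
  (∑ i, (f (x + Pi.single i 1) + f (x - Pi.single i 1))) / (2 * d)

lemma adj_iff {d : ℕ} {R : Type*} [AddCommGroupWithOne R] [NeZero (1 : R)]
    (x y : Fin d → R) :
    adj x y ↔ ∃ i, y = x + Pi.single i 1 ∨ y = x - Pi.single i 1 := by
  constructor
  · rintro ⟨-, i, hi, hj⟩
    refine ⟨i, hi.imp (fun h => ?_) fun h => ?_⟩
    · ext j
      by_cases hji : j = i
      · subst hji; simp [h]
      · simp [hji, hj j hji]
    · ext j
      by_cases hji : j = i
      · subst hji; simp [h]
      · simp [hji, hj j hji]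
  · rintro ⟨i, h | h⟩
    · refine ⟨fun hxy => ?_, i, Or.inl ?_, fun j hj => ?_⟩
      · rw [← hxy] at h
        have := congrFun h i
        simp at this
      · simp [h]
      · simp [h, hj]
    · refine ⟨fun hxy => ?_, i, Or.inr ?_, fun j hj => ?_⟩
      · rw [← hxy] at h
        have := congrFun h i
        simp only [Pi.sub_apply, Pi.single_eq_same] at this
        exact one_ne_zero (sub_eq_self.mp this.symm)
      · simp [h]
      · simp [h, hj]

lemma adj_symm {d : ℕ} {R : Type*} [AddGroupWithOne R] {x y : Fin d → R} (h : adj x y) :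
    adj y x := by
  obtain ⟨hne, i, hi, hj⟩ := h
  exact ⟨hne.symm, i, hi.symm, fun j hji => (hj j hji).symm⟩

lemma adj_comm {d : ℕ} {R : Type*} [AddGroupWithOne R] (x y : Fin d → R) :
    adj x y ↔ adj y x := ⟨adj_symm, adj_symm⟩

lemma zmod_two_ne_zero {N : ℕ} (hN : 3 ≤ N) : (1 : ZMod N) + 1 ≠ 0 := by
  have h : ((2 : ℕ) : ZMod N) ≠ 0 := by
    rw [Ne, ZMod.natCast_eq_zero_iff]
    exact fun h => absurd (Nat.le_of_dvd (by norm_num) h) (by omega)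
  intro h2
  apply h
  push_cast
  rw [← h2]; ring

lemma sum_adj {d N : ℕ} [NeZero N] (hN : 3 ≤ N) (x : Torus d N) {M : Type*} [AddCommMonoid M]
    (f : Torus d N → M) :
    ∑ y, (if adj x y then f y else 0) =
      ∑ i, (f (x + Pi.single i 1) + f (x - Pi.single i 1)) := by
  have : Fact (1 < N) := ⟨by omega⟩
  have h2 := zmod_two_ne_zero hN
  have h10 : (1 : ZMod N) ≠ 0 := one_ne_zero
  have h11 : (1 : ZMod N) ≠ -1 := fun h => h2 (by nth_rewrite 2 [h]; ring)
  set φ : Fin d × Bool → Torus d N := fun p => x + Pi.single p.1 (if p.2 then 1 else -1) with hφ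
  have hinj : Function.Injective φ := by
    rintro ⟨i, b⟩ ⟨j, c⟩ h
    have h' : (Pi.single i (if b then 1 else -1) : Torus d N) = Pi.single j (if c then 1 else -1) :=
      add_left_cancel h
    have hij : i = j := by
      by_contra hij
      have := congrFun h' i
      rw [Pi.single_eq_same, Pi.single_eq_of_ne hij] at this
      cases b <;> simp at this
    subst hij
    have := congrFun h' i
    rw [Pi.single_eq_same, Pi.single_eq_same] at this
    cases b <;> cases c <;> simp_all
  have himg : Finset.univ.filter (fun y => adj x y) = Finset.univ.image φ := by
    ext y
    simp only [Finset.mem_filter, Finset.mem_univ, true_and, Finset.mem_image, adj_iff]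
    constructor
    · rintro ⟨i, h | h⟩
      · exact ⟨(i, true), by simp [hφ, h]⟩
      · exact ⟨(i, false), by simp [hφ, h, sub_eq_add_neg, Pi.single_neg]⟩
    · rintro ⟨⟨i, b⟩, h⟩
      refine ⟨i, ?_⟩
      cases b
      · right; simp [hφ, ← h, sub_eq_add_neg, Pi.single_neg]
      · left; simp [hφ, ← h]
  rw [← Finset.sum_filter, himg, Finset.sum_image (fun a _ b _ h => hinj h),
    Fintype.sum_prod_type]
  refine Finset.sum_congr rfl fun i _ => ?_
  simp [hφ, sub_eq_add_neg, Pi.single_neg]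

/-- Averaging over the neighbours, killed on `B`. -/
def killAvg {d N : ℕ} (B : Set (Torus d N)) (f : Torus d N → ℝ) (x : Torus d N) : ℝ :=
  if x ∈ B then 0 else avg (fun y => if y ∈ B then 0 else f y) x

lemma killAvg_eq_avg {d N : ℕ} {B : Set (Torus d N)} {f : Torus d N → ℝ}
    (hf : ∀ x ∈ B, f x = 0) {x : Torus d N} (hx : x ∉ B) : killAvg B f x = avg f x := by
  rw [killAvg, if_neg hx]
  congr 1
  ext y
  split_ifs with h
  · exact (hf y h).symm
  · rfl

lemma killedMul_eq {d N : ℕ} [NeZero N] (hN : 3 ≤ N) (B : Set (Torus d N)) (f : Torus d N → ℝ)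
    {x : Torus d N} (hx : x ∉ B) : killedMul d N B f x = killAvg B f x := by
  rw [killedMul, killAvg, if_neg hx, avg, finsum_eq_sum_of_fintype,
    ← sum_adj hN x fun y => if y ∈ B then 0 else f y, Finset.sum_div]
  refine Finset.sum_congr rfl fun y _ => ?_
  by_cases h1 : y ∈ B <;> by_cases h2 : adj x y <;> simp [h1, h2]

/-- `killAvg` as a continuous linear operator. -/
def killOp {d N : ℕ} [NeZero N] (B : Set (Torus d N)) :
    EuclideanSpace ℝ (Torus d N) →L[ℝ] EuclideanSpace ℝ (Torus d N) :=
  LinearMap.toContinuousLinearMap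
    { toFun := fun f => WithLp.toLp 2 (killAvg B f.ofLp)
      map_add' := by
        intro f g
        ext x
        simp only [killAvg, avg, PiLp.add_apply]
        split_ifs
        · simp
        · rw [← add_div, ← Finset.sum_add_distrib]
          congr 1
          refine Finset.sum_congr rfl fun i _ => ?_
          split_ifs <;> ring
      map_smul' := by
        intro c f
        ext x
        simp only [killAvg, avg, PiLp.smul_apply, smul_eq_mul,
          RingHom.id_apply]
        split_ifs
        · simp
        · rw [← mul_div_assoc, Finset.mul_sum]
          congr 1
          refine Finset.sum_congr rfl fun i _ => ?_
          split_ifs <;> ring }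

lemma killOp_apply {d N : ℕ} [NeZero N] (B : Set (Torus d N)) (f : EuclideanSpace ℝ (Torus d N))
    (x : Torus d N) : killOp B f x = killAvg B f.ofLp x := rfl

/-! ### The walk killed on `B` -/

lemma measure_walk_step {d N : ℕ} [NeZero N] {μ : Measure (ℕ → Torus d N)}
    {init : Torus d N → ℝ≥0∞} (hμ : IsWalkLaw μ init) (n : ℕ) (p : (ℕ → Torus d N) → Prop)
    (hp : ∀ ω ω', (∀ k ≤ n, ω k = ω' k) → p ω → p ω') (y z : Torus d N) :
    μ {ω | (p ω ∧ ω n = z) ∧ ω (n + 1) = y} = μ {ω | p ω ∧ ω n = z} * srwStep z y := by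
  set r : (ℕ → Torus d N) → (Fin (n + 1) → Torus d N) := fun ω i => ω i with hr
  have hrm : Measurable r := by fun_prop
  set ext : (Fin (n + 1) → Torus d N) → Torus d N → (ℕ → Torus d N) :=
    fun w y k => if h : k < n + 1 then w ⟨k, h⟩ else y with hext
  have hsum : ∀ s : Set (ℕ → Torus d N), μ s = ∑ w, μ (s ∩ r ⁻¹' {w}) := by
    intro s
    have h := sum_measure_preimage_singleton (μ := μ.restrict s) (f := r) Finset.univ
      (fun w _ => hrm (measurableSet_singleton w))
    simp only [Finset.coe_univ, Set.preimage_univ, Measure.restrict_apply_univ] at h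
    rw [← h]
    refine Finset.sum_congr rfl fun w _ => ?_
    rw [Measure.restrict_apply (hrm (measurableSet_singleton w)), Set.inter_comm]
  have hcyl : ∀ (w : Fin (n + 1) → Torus d N) (y : Torus d N),
      r ⁻¹' {w} = {ω | ∀ k, k ≤ n → ω k = ext w y k} := by
    intro w y
    ext ω
    simp only [Set.mem_preimage, Set.mem_singleton_iff, hr, hext, funext_iff, Set.mem_ofPred_eq]
    constructor
    · intro h k hk
      rw [dif_pos (Nat.lt_succ_of_le hk)]
      exact h ⟨k, Nat.lt_succ_of_le hk⟩
    · intro h i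
      have := h i (Nat.le_of_lt_succ i.2)
      rwa [dif_pos i.2] at this
  rw [hsum {ω | (p ω ∧ ω n = z) ∧ ω (n + 1) = y}, hsum {ω | p ω ∧ ω n = z}, Finset.sum_mul]
  refine Finset.sum_congr rfl fun w _ => ?_
  by_cases hw : p (ext w y) ∧ ext w y n = z
  · have e1 : {ω | (p ω ∧ ω n = z) ∧ ω (n + 1) = y} ∩ r ⁻¹' {w} =
        {ω | ∀ k, k ≤ n + 1 → ω k = ext w y k} := by
      rw [hcyl w y]
      ext ω
      simp only [Set.mem_inter_iff, Set.mem_ofPred_eq]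
      constructor
      · rintro ⟨⟨-, h1⟩, h2⟩ k hk
        rcases Nat.lt_or_ge k (n + 1) with h | h
        · exact h2 k (Nat.le_of_lt_succ h)
        · obtain rfl : k = n + 1 := le_antisymm hk h
          simp [hext, h1]
      · intro h
        refine ⟨⟨⟨hp _ _ (fun k hk => (h k (by omega)).symm) hw.1, ?_⟩, ?_⟩, fun k hk => h k (by omega)⟩
        · rw [h n (by omega), hw.2]
        · rw [h (n + 1) le_rfl]; simp [hext]
    have e2 : {ω | p ω ∧ ω n = z} ∩ r ⁻¹' {w} = {ω | ∀ k, k ≤ n → ω k = ext w y k} := by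
      rw [hcyl w y]
      ext ω
      simp only [Set.mem_inter_iff, Set.mem_ofPred_eq]
      refine ⟨fun h => h.2, fun h => ⟨⟨hp _ _ (fun k hk => (h k hk).symm) hw.1, ?_⟩, h⟩⟩
      rw [h n le_rfl, hw.2]
    rw [e1, e2, hμ.2, hμ.2, Finset.prod_range_succ, hw.2, mul_assoc]
    congr 3
    simp [hext]
  · have e : ∀ s ⊆ {ω | p ω ∧ ω n = z}, s ∩ r ⁻¹' {w} = ∅ := by
      intro s hs
      rw [hcyl w y, Set.eq_empty_iff_forall_notMem]
      rintro ω ⟨h1, h2⟩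
      have h3 := hs h1
      exact hw ⟨hp _ _ h2 h3.1, (h2 n le_rfl) ▸ h3.2⟩
    rw [e _ (fun ω h => h.1), e _ subset_rfl]
    simp

lemma killAvg_nonneg {d N : ℕ} {B : Set (Torus d N)} {f : Torus d N → ℝ} (hf : ∀ x, 0 ≤ f x)
    (x : Torus d N) : 0 ≤ killAvg B f x := by
  rw [killAvg, avg]
  split_ifs
  · exact le_rfl
  · refine div_nonneg (Finset.sum_nonneg fun i _ => add_nonneg ?_ ?_) (by positivity) <;>
    split_ifs <;> first | exact le_rfl | exact hf _

lemma killOp_pow_nonneg {d N : ℕ} [NeZero N] (B : Set (Torus d N)) (x : Torus d N) (n : ℕ)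
    (y : Torus d N) : 0 ≤ ((killOp B ^ n) (EuclideanSpace.single x 1)) y := by
  induction n generalizing y with
  | zero => simp [PiLp.single_apply]; split_ifs <;> simp
  | succ n ih =>
    rw [pow_succ', mul_apply_eq_comp, killOp_apply]
    exact killAvg_nonneg ih y

lemma killOp_pow_apply_mem {d N : ℕ} [NeZero N] {B : Set (Torus d N)} {x : Torus d N} (hx : x ∉ B)
    (n : ℕ) {y : Torus d N} (hy : y ∈ B) :
    ((killOp B ^ n) (EuclideanSpace.single x 1)) y = 0 := by
  cases n with
  | zero =>
    have : y ≠ x := fun h => hx (h ▸ hy)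
    simp [this]
  | succ n =>
    rw [pow_succ', mul_apply_eq_comp, killOp_apply, killAvg, if_pos hy]

lemma measure_killed_walk {d N : ℕ} [NeZero N] (hN : 3 ≤ N) {B : Set (Torus d N)}
    {x : Torus d N} (hx : x ∉ B) {μ : Measure (ℕ → Torus d N)}
    (hμ : IsWalkLaw μ (pointInit x)) (n : ℕ) (y : Torus d N) :
    μ {ω | (∀ k ≤ n, ω k ∉ B) ∧ ω n = y} =
      ENNReal.ofReal (((killOp B ^ n) (EuclideanSpace.single x 1)) y) := by
  induction n generalizing y with
  | zero =>
    have h := hμ.2 0 (fun _ => y)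
    simp only [Finset.range_zero, Finset.prod_empty, mul_one, pointInit] at h
    by_cases hyx : y = x
    · subst hyx
      have hs : {ω : ℕ → Torus d N | (∀ k ≤ 0, ω k ∉ B) ∧ ω 0 = y} =
          {ω | ∀ k, k ≤ 0 → ω k = y} := by
        ext ω
        simp only [Nat.le_zero, forall_eq, Set.mem_ofPred_eq]
        exact ⟨fun h => h.2, fun h => ⟨h ▸ hx, h⟩⟩
      rw [hs, h]
      simp
    · rw [if_neg hyx] at h
      have h0 : μ {ω : ℕ → Torus d N | (∀ k ≤ 0, ω k ∉ B) ∧ ω 0 = y} = 0 := by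
        refine measure_mono_null ?_ h
        rintro ω ⟨-, h⟩ k hk
        obtain rfl : k = 0 := by omega
        exact h
      rw [h0]
      simp [hyx]
  | succ n ih =>
    by_cases hy : y ∈ B
    · have h0 : {ω : ℕ → Torus d N | (∀ k ≤ n + 1, ω k ∉ B) ∧ ω (n + 1) = y} = ∅ := by
        rw [Set.eq_empty_iff_forall_notMem]
        rintro ω ⟨h1, h2⟩
        exact h1 (n + 1) le_rfl (h2 ▸ hy)
      rw [h0, killOp_pow_apply_mem hx _ hy]
      simp
    · have hm : ∀ k, Measurable fun ω : ℕ → Torus d N => ω k := fun k => measurable_pi_apply k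
      have hU : {ω : ℕ → Torus d N | (∀ k ≤ n + 1, ω k ∉ B) ∧ ω (n + 1) = y} =
          ⋃ z, {ω | ((∀ k ≤ n, ω k ∉ B) ∧ ω n = z) ∧ ω (n + 1) = y} := by
        ext ω
        simp only [Set.mem_ofPred_eq, Set.mem_iUnion]
        constructor
        · rintro ⟨h1, h2⟩
          exact ⟨ω n, ⟨fun k hk => h1 k (by omega), rfl⟩, h2⟩
        · rintro ⟨z, ⟨h1, -⟩, h2⟩
          refine ⟨fun k hk => ?_, h2⟩
          rcases Nat.lt_or_ge k (n + 1) with h | h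
          · exact h1 k (by omega)
          · obtain rfl : k = n + 1 := le_antisymm hk h
            rwa [h2]
      have hmeas : ∀ z, MeasurableSet
          {ω : ℕ → Torus d N | ((∀ k ≤ n, ω k ∉ B) ∧ ω n = z) ∧ ω (n + 1) = y} := by
        intro z
        have e : {ω : ℕ → Torus d N | ((∀ k ≤ n, ω k ∉ B) ∧ ω n = z) ∧ ω (n + 1) = y} =
            ((⋂ k ≤ n, (fun ω : ℕ → Torus d N => ω k) ⁻¹' Bᶜ) ∩
              (fun ω : ℕ → Torus d N => ω n) ⁻¹' {z}) ∩
              (fun ω : ℕ → Torus d N => ω (n + 1)) ⁻¹' {y} := by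
          ext ω; simp
        rw [e]
        exact ((MeasurableSet.biInter (Set.to_countable _) fun k _ =>
          hm k (Set.toFinite _).measurableSet).inter (hm n (measurableSet_singleton _))).inter
            (hm (n + 1) (measurableSet_singleton _))
      have hdisj : Pairwise (Function.onFun Disjoint fun z =>
          {ω : ℕ → Torus d N | ((∀ k ≤ n, ω k ∉ B) ∧ ω n = z) ∧ ω (n + 1) = y}) := by
        intro z z' hzz
        rw [Function.onFun, Set.disjoint_left]
        rintro ω ⟨⟨-, h⟩, -⟩ ⟨⟨-, h'⟩, -⟩
        exact hzz (h.symm.trans h')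
      rw [hU, measure_iUnion hdisj hmeas, tsum_fintype]
      have hstep : ∀ z, μ {ω | ((∀ k ≤ n, ω k ∉ B) ∧ ω n = z) ∧ ω (n + 1) = y} =
          ENNReal.ofReal (if adj y z then
            ((killOp B ^ n) (EuclideanSpace.single x 1)) z / (2 * d) else 0) := by
        intro z
        rw [measure_walk_step hμ n (fun ω => ∀ k ≤ n, ω k ∉ B)
          (fun ω ω' h hω k hk => h k hk ▸ hω k hk), ih, srwStep, adj_comm z y]
        split_ifs with hadj
        · have hd : 0 < d := by
            obtain ⟨-, i, -⟩ := hadj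
            exact i.pos
          rw [div_eq_mul_inv, ENNReal.ofReal_mul (killOp_pow_nonneg B x n z),
            ENNReal.ofReal_inv_of_pos (by positivity)]
          congr 2
          rw [← ENNReal.ofReal_natCast]
          push_cast
          rfl
        · simp
      simp_rw [hstep]
      rw [← ENNReal.ofReal_sum_of_nonneg]
      · congr 1
        rw [sum_adj hN y, pow_succ', mul_apply_eq_comp, killOp_apply,
          killAvg_eq_avg (fun z hz => killOp_pow_apply_mem hx n hz) hy, avg, Finset.sum_div]
        refine Finset.sum_congr rfl fun i _ => ?_
        rw [add_div]
      · intro z _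
        split_ifs
        · exact div_nonneg (killOp_pow_nonneg B x n z) (by positivity)
        · exact le_rfl

/-! ### Dirichlet form and Poincaré inequality -/

/-- The sum of squared increments of `f` over the edges of the torus. -/
def edgeEnergy {d N : ℕ} [NeZero N] (f : Torus d N → ℝ) : ℝ :=
  ∑ i, ∑ x, (f (x + Pi.single i 1) - f x) ^ 2

lemma sum_shift {G : Type*} [AddGroup G] [Fintype G] (f : G → ℝ) (u : G) :
    ∑ x, f (x + u) = ∑ x, f x :=
  Equiv.sum_comp (Equiv.addRight u) f

lemma sum_mul_sub_avg {d N : ℕ} [NeZero N] (hd : d ≠ 0) (f : Torus d N → ℝ) :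
    ∑ x, f x * (f x - avg f x) = edgeEnergy f / (2 * d) := by
  have hd' : (d : ℝ) ≠ 0 := by exact_mod_cast hd
  have h1 : ∀ x, f x * (f x - avg f x) =
      (∑ i : Fin d, f x * (2 * f x - f (x + Pi.single i 1) - f (x - Pi.single i 1))) / (2 * d) := by
    intro x
    rw [avg, ← Finset.mul_sum]
    simp only [sub_sub, Finset.sum_sub_distrib]
    simp only [Finset.sum_const, Finset.card_univ, Fintype.card_fin, nsmul_eq_mul]
    field_simp
  simp_rw [h1]
  rw [← Finset.sum_div, Finset.sum_comm, edgeEnergy]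
  congr 1
  refine Finset.sum_congr rfl fun i _ => ?_
  have e1 := sum_shift (fun x : Torus d N => f x * f (x - Pi.single i 1)) (Pi.single i 1)
  have e2 := sum_shift (fun x : Torus d N => f x ^ 2) (Pi.single i 1)
  simp only [add_sub_cancel_right] at e1
  have e3 : ∀ x : Torus d N, f x * (2 * f x - f (x + Pi.single i 1) - f (x - Pi.single i 1)) =
      2 * f x ^ 2 - f (x + Pi.single i 1) * f x - f x * f (x - Pi.single i 1) := fun x => by ring
  have e4 : ∀ x : Torus d N, (f (x + Pi.single i 1) - f x) ^ 2 =
      f (x + Pi.single i 1) ^ 2 + f x ^ 2 - 2 * (f (x + Pi.single i 1) * f x) := fun x => by ring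
  simp_rw [e3, e4, Finset.sum_sub_distrib, Finset.sum_add_distrib, ← Finset.mul_sum]
  rw [← e1, e2]
  ring

/-- The `ℓ²`-norm of the increment of `f` in the direction `u`. -/
def incr {G : Type*} [AddGroup G] [Fintype G] (f : G → ℝ) (u : G) : ℝ :=
  √(∑ x, (f (x + u) - f x) ^ 2)

lemma incr_add_le {G : Type*} [AddCommGroup G] [Fintype G] (f : G → ℝ) (u v : G) :
    incr f (u + v) ≤ incr f u + incr f v := by
  have h := norm_add_le (WithLp.toLp 2 fun x => f (x + u + v) - f (x + u) : EuclideanSpace ℝ G)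
    (WithLp.toLp 2 fun x => f (x + u) - f x)
  simp only [EuclideanSpace.norm_eq, PiLp.add_apply, Real.norm_eq_abs, sq_abs] at h
  rw [sum_shift (fun x => (f (x + v) - f x) ^ 2) u] at h
  rw [add_comm (incr f u)]
  refine le_trans (le_of_eq ?_) h
  rw [incr]
  congr 1
  refine Finset.sum_congr rfl fun x _ => ?_
  rw [← add_assoc]
  ring

lemma incr_zero {G : Type*} [AddGroup G] [Fintype G] (f : G → ℝ) : incr f 0 = 0 := by
  simp [incr]

lemma incr_nonneg {G : Type*} [AddGroup G] [Fintype G] (f : G → ℝ) (u : G) : 0 ≤ incr f u :=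
  Real.sqrt_nonneg _

lemma incr_sq {G : Type*} [AddGroup G] [Fintype G] (f : G → ℝ) (u : G) :
    incr f u ^ 2 = ∑ x, (f (x + u) - f x) ^ 2 :=
  Real.sq_sqrt (Finset.sum_nonneg fun _ _ => sq_nonneg _)

lemma incr_nsmul_le {G : Type*} [AddCommGroup G] [Fintype G] (f : G → ℝ) (u : G) (n : ℕ) :
    incr f (n • u) ≤ n * incr f u := by
  induction n with
  | zero => simp [incr_zero]
  | succ n ih =>
    rw [add_smul, one_smul]
    push_cast
    linarith [incr_add_le f (n • u) u]

lemma incr_sq_le_edgeEnergy {d N : ℕ} [NeZero N] (f : Torus d N → ℝ) (u : Torus d N) :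
    incr f u ^ 2 ≤ N ^ 2 * d * edgeEnergy f := by
  have h1 : incr f u ≤ ∑ i, (N : ℝ) * incr f (Pi.single i 1) := by
    have hu : u = ∑ i, (u i).val • (Pi.single i 1 : Torus d N) := by
      ext j
      rw [Finset.sum_apply, Finset.sum_eq_single j]
      · rw [Pi.smul_apply, Pi.single_eq_same, nsmul_eq_mul, mul_one]
        exact (ZMod.natCast_zmod_val (u j)).symm
      · intro i _ hij
        rw [Pi.smul_apply, Pi.single_eq_of_ne hij.symm, smul_zero]
      · simp
    calc incr f u = incr f (∑ i, (u i).val • (Pi.single i 1 : Torus d N)) := by rw [← hu]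
      _ ≤ ∑ i, incr f ((u i).val • (Pi.single i 1 : Torus d N)) :=
          Finset.le_sum_of_subadditive _ (incr_zero f).le (incr_add_le f) _ _
      _ ≤ _ := Finset.sum_le_sum fun i _ => (incr_nsmul_le f _ _).trans <| by
          gcongr
          · exact incr_nonneg _ _
          · exact (ZMod.val_lt (u i)).le
  rw [← Finset.mul_sum] at h1
  have h2 := sq_sum_le_card_mul_sum_sq (s := Finset.univ)
    (f := fun i : Fin d => incr f (Pi.single i 1))
  simp only [Finset.card_univ, Fintype.card_fin, incr_sq] at h2
  calc incr f u ^ 2 ≤ (N * ∑ i, incr f (Pi.single i 1)) ^ 2 := by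
        gcongr; exact incr_nonneg _ _
    _ = N ^ 2 * (∑ i, incr f (Pi.single i 1)) ^ 2 := by ring
    _ ≤ N ^ 2 * (d * edgeEnergy f) := by gcongr; exact h2
    _ = _ := by ring

lemma card_torus (d N : ℕ) [NeZero N] : Fintype.card (Torus d N) = N ^ d := by
  simp [ZMod.card]

/-- Poincaré inequality on the torus. -/
lemma poincare {d N : ℕ} [NeZero N] (f : Torus d N → ℝ) :
    ∑ x, f x ^ 2 - (∑ x, f x) ^ 2 / N ^ d ≤ N ^ 2 * d / 2 * edgeEnergy f := by
  have hN : (0 : ℝ) < (N : ℝ) ^ d := pow_pos (by exact_mod_cast NeZero.pos N) d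
  have hc : ((Finset.univ : Finset (Torus d N)).card : ℝ) = N ^ d := by
    rw [Finset.card_univ, card_torus]; push_cast; rfl
  have h1 : ∑ u, incr f u ^ 2 = 2 * N ^ d * ∑ x, f x ^ 2 - 2 * (∑ x, f x) ^ 2 := by
    simp_rw [incr_sq]
    rw [Finset.sum_comm]
    have : ∀ x : Torus d N, ∑ u, (f (x + u) - f x) ^ 2 =
        ∑ y, f y ^ 2 - 2 * f x * ∑ y, f y + N ^ d * f x ^ 2 := by
      intro x
      rw [show ∑ u, (f (x + u) - f x) ^ 2 = ∑ y, (f y - f x) ^ 2 from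
          Equiv.sum_comp (Equiv.addLeft x) fun y => (f y - f x) ^ 2, ← hc, ← nsmul_eq_mul,
        ← Finset.sum_const, Finset.mul_sum, ← Finset.sum_sub_distrib, ← Finset.sum_add_distrib]
      exact Finset.sum_congr rfl fun y _ => by ring
    simp_rw [this, Finset.sum_add_distrib, Finset.sum_sub_distrib, ← Finset.sum_mul,
      ← Finset.mul_sum, Finset.sum_const, nsmul_eq_mul, hc]
    ring
  have h2 : ∑ u, incr f u ^ 2 ≤ N ^ d * (N ^ 2 * d * edgeEnergy f) := by
    rw [← hc, ← nsmul_eq_mul, ← Finset.sum_const]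
    exact Finset.sum_le_sum fun u _ => incr_sq_le_edgeEnergy f u
  rw [h1] at h2
  rw [← mul_le_mul_iff_right₀ hN, mul_sub, mul_div_cancel₀ _ hN.ne']
  linarith

/-! ### The principal eigenvalue -/

lemma sum_avg_mul {d N : ℕ} [NeZero N] (f g : Torus d N → ℝ) :
    ∑ x, avg f x * g x = ∑ x, f x * avg g x := by
  simp_rw [avg, div_mul_eq_mul_div, mul_div_assoc']
  rw [← Finset.sum_div, ← Finset.sum_div]
  congr 1
  simp_rw [Finset.sum_mul, Finset.mul_sum]
  rw [Finset.sum_comm, Finset.sum_comm (t := Finset.univ) (f := fun x i => f x * _)]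
  refine Finset.sum_congr rfl fun i _ => ?_
  have e1 := sum_shift (fun x : Torus d N => f x * g (x - Pi.single i 1)) (Pi.single i 1)
  have e2 := sum_shift (fun x : Torus d N => f (x - Pi.single i 1) * g x) (Pi.single i 1)
  simp only [add_sub_cancel_right] at e1 e2
  simp_rw [add_mul, mul_add, Finset.sum_add_distrib]
  rw [e1, ← e2]
  ring

lemma sum_killAvg_mul {d N : ℕ} [NeZero N] (B : Set (Torus d N)) (f g : Torus d N → ℝ) :
    ∑ x, killAvg B f x * g x = ∑ x, f x * killAvg B g x := by
  have h := sum_avg_mul (fun y => if y ∈ B then 0 else f y) (fun y => if y ∈ B then 0 else g y)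
  convert h using 2 with x _ x _ <;> rw [killAvg] <;> split_ifs <;> simp

lemma inner_eq_sum {ι : Type*} [Fintype ι] (f g : EuclideanSpace ℝ ι) :
    inner ℝ f g = ∑ x, f x * g x := by
  rw [PiLp.inner_apply]
  exact Finset.sum_congr rfl fun x _ => by simp [mul_comm]

lemma killOp_isSymmetric {d N : ℕ} [NeZero N] (B : Set (Torus d N)) :
    (killOp B : EuclideanSpace ℝ (Torus d N) →ₗ[ℝ] _).IsSymmetric := by
  intro f g
  rw [inner_eq_sum, inner_eq_sum]
  exact sum_killAvg_mul B f.ofLp g.ofLp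

/-- `σ` is a probability vector supported off `B`, it is an eigenvector of the walk killed on `B`
with eigenvalue `l`, and `l` is the maximum of the Rayleigh quotient. -/
structure IsPrincipal {d N : ℕ} [NeZero N] (B : Set (Torus d N)) (σ : Torus d N → ℝ) (l : ℝ) :
    Prop where
  nonneg : ∀ x, 0 ≤ σ x
  eq_zero : ∀ x ∈ B, σ x = 0
  sum_eq : ∑ x, σ x = 1
  avg_eq : ∀ x, x ∉ B → avg σ x = l * σ x
  rayleigh : ∀ f : Torus d N → ℝ, (∀ x ∈ B, f x = 0) → ∑ x, f x * avg f x ≤ l * ∑ x, f x ^ 2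

lemma sum_mul_killAvg {d N : ℕ} [NeZero N] {B : Set (Torus d N)} {f g : Torus d N → ℝ}
    (hf : ∀ x ∈ B, f x = 0) (hg : ∀ x ∈ B, g x = 0) :
    ∑ x, f x * killAvg B g x = ∑ x, f x * avg g x := by
  refine Finset.sum_congr rfl fun x _ => ?_
  by_cases hx : x ∈ B
  · simp [hf x hx]
  · rw [killAvg_eq_avg hg hx]

lemma IsQSD.isPrincipal {d N : ℕ} [NeZero N] (hN : 3 ≤ N) {B : Set (Torus d N)}
    {σ : Torus d N → ℝ} (h : IsQSD d N B σ) : ∃ l, IsPrincipal B σ l := by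
  obtain ⟨h0, hB, h1, l, hl, hmax⟩ := h
  have havg : ∀ x, x ∉ B → avg σ x = l * σ x := fun x hx => by
    rw [← hl x hx, killedMul_eq hN B σ hx, killAvg_eq_avg hB hx]
  rw [finsum_eq_sum_of_fintype] at h1
  have hσne : ∃ x, σ x ≠ 0 := by
    by_contra! h
    simp [h] at h1
  have hl0 : 0 ≤ l := by
    obtain ⟨x, hx⟩ := hσne
    have hxB : x ∉ B := fun h => hx (hB x h)
    have := havg x hxB
    have h2 : 0 ≤ avg σ x := div_nonneg
      (Finset.sum_nonneg fun i _ => add_nonneg (h0 _) (h0 _)) (by positivity)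
    rw [this] at h2
    exact nonneg_of_mul_nonneg_left h2 (lt_of_le_of_ne (h0 x) hx.symm)
  refine ⟨l, h0, hB, h1, havg, fun f hf => ?_⟩
  have hsym := killOp_isSymmetric B
  have hμ := hsym.hasEigenvalue_iSup_of_finiteDimensional
  set μ : ℝ := ⨆ x : { x : EuclideanSpace ℝ (Torus d N) // x ≠ 0 },
    RCLike.re (inner ℝ ((killOp B : EuclideanSpace ℝ (Torus d N) →ₗ[ℝ] _) x)
      (x : EuclideanSpace ℝ (Torus d N))) / ‖(x : EuclideanSpace ℝ (Torus d N))‖ ^ 2 with hμdef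
  have hμl : μ ≤ l := by
    by_cases hμ0 : μ = 0
    · rw [hμ0]; exact hl0
    obtain ⟨v, hv⟩ := hμ.exists_hasEigenvector
    have hv1 : ∀ x, killAvg B v.ofLp x = μ * v x := fun x => by
      have := congrArg (fun w : EuclideanSpace ℝ (Torus d N) => w x) hv.apply_eq_smul
      simpa [killOp_apply] using this
    have hvB : ∀ x ∈ B, v x = 0 := fun x hx => by
      have := hv1 x
      rw [killAvg, if_pos hx] at this
      exact (mul_eq_zero.mp this.symm).resolve_left hμ0
    refine hmax μ ⟨v.ofLp, fun h => hv.2 (by ext x; exact congrFun h x), hvB, fun x hx => ?_⟩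
    rw [killedMul_eq hN B _ hx, hv1]
  have hbdd : BddAbove (Set.range fun x : { x : EuclideanSpace ℝ (Torus d N) // x ≠ 0 } =>
      RCLike.re (inner ℝ ((killOp B : EuclideanSpace ℝ (Torus d N) →ₗ[ℝ] _) x)
      (x : EuclideanSpace ℝ (Torus d N))) / ‖(x : EuclideanSpace ℝ (Torus d N))‖ ^ 2) := by
    refine ⟨‖killOp B‖, ?_⟩
    rintro _ ⟨⟨x, hx⟩, rfl⟩
    have hx' : 0 < ‖x‖ := norm_pos_iff.mpr hx
    rw [div_le_iff₀ (by positivity), RCLike.re_to_real]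
    refine (Real.le_norm_self _).trans ((norm_inner_le_norm _ _).trans ?_)
    rw [pow_two, ← mul_assoc]
    gcongr
    exact (killOp B).le_opNorm x
  by_cases hf0 : f = 0
  · simp [hf0, avg]
  have hw : (WithLp.toLp 2 f : EuclideanSpace ℝ (Torus d N)) ≠ 0 := fun h => hf0 (by
    ext x; exact congrArg (fun w : EuclideanSpace ℝ (Torus d N) => w x) h)
  have h3 := le_ciSup hbdd ⟨_, hw⟩
  rw [← hμdef] at h3
  have h4 := (div_le_iff₀ (pow_pos (norm_pos_iff.mpr hw) 2)).mp h3
  simp only [EuclideanSpace.norm_sq_eq, Real.norm_eq_abs, sq_abs] at h4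
  rw [real_inner_comm] at h4
  simp only [inner_eq_sum, ContinuousLinearMap.coe_coe, killOp_apply] at h4
  rw [← sum_mul_killAvg hf hf]
  refine le_trans h4 (mul_le_mul_of_nonneg_right hμl (Finset.sum_nonneg fun _ _ => sq_nonneg _))

/-! ### Distances on the torus -/

lemma torusDist_zero_left {d N : ℕ} [NeZero N] (x : Torus d N) :
    torusDist 0 x = Finset.univ.sup fun i => (x i).valMinAbs.natAbs := by
  rw [torusDist]
  refine Finset.sup_congr rfl fun i _ => ?_
  rw [ZMod.valMinAbs_natAbs_eq_min, min_comm, Pi.zero_apply, sub_zero, zero_sub, ZMod.neg_val]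
  split_ifs with h <;> simp [h]

lemma natAbs_le_torusDist {d N : ℕ} [NeZero N] (x : Torus d N) (i : Fin d) :
    (x i).valMinAbs.natAbs ≤ torusDist 0 x := by
  rw [torusDist_zero_left]
  exact Finset.le_sup (f := fun i => (x i).valMinAbs.natAbs) (Finset.mem_univ i)

lemma torusDist_le_iff {d N : ℕ} [NeZero N] {x : Torus d N} {m : ℕ} :
    torusDist 0 x ≤ m ↔ ∀ i, (x i).valMinAbs.natAbs ≤ m := by
  rw [torusDist_zero_left, Finset.sup_le_iff]
  simp

lemma torusDist_add_le {d N : ℕ} [NeZero N] (x y : Torus d N) :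
    torusDist 0 (x + y) ≤ torusDist 0 x + torusDist 0 y := by
  rw [torusDist_le_iff]
  intro i
  refine (ZMod.natAbs_valMinAbs_add_le _ _).trans ((Int.natAbs_add_le _ _).trans ?_)
  exact add_le_add (natAbs_le_torusDist x i) (natAbs_le_torusDist y i)

lemma torusDist_neg {d N : ℕ} [NeZero N] (x : Torus d N) : torusDist 0 (-x) = torusDist 0 x := by
  simp [torusDist, min_comm]

lemma torusDist_intCast_le {d N : ℕ} [NeZero N] {v : Lat d} {m : ℕ}
    (hv : ∀ i, (v i).natAbs ≤ m) : torusDist 0 (fun i => (v i : ZMod N)) ≤ m := by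
  rw [torusDist_le_iff]
  intro i
  refine le_trans ?_ (hv i)
  exact ZMod.natAbs_min_of_le_div_two N _ _ (by simp) (ZMod.natAbs_valMinAbs_le _)

lemma torusDist_single_le {d N : ℕ} [NeZero N] (i : Fin d) :
    torusDist 0 (Pi.single i 1 : Torus d N) ≤ 1 := by
  have h := torusDist_intCast_le (N := N) (v := Pi.single i 1) (m := 1) (fun j => by
    by_cases hj : j = i
    · subst hj; simp
    · simp [hj])
  convert h using 2
  ext j
  by_cases hj : j = i
  · subst hj; simp
  · simp [hj]

lemma card_torusDist_le {d N : ℕ} [NeZero N] (m : ℕ) :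
    (Finset.univ.filter fun x : Torus d N => torusDist 0 x ≤ m).card ≤ (2 * m + 1) ^ d := by
  have h := Finset.card_le_card_of_injOn (s := Finset.univ.filter fun x : Torus d N =>
      torusDist 0 x ≤ m) (t := Fintype.piFinset fun _ : Fin d => Finset.Icc (-(m : ℤ)) m)
    (fun x i => (x i).valMinAbs) (fun x hx => by
      simp only [Finset.coe_filter, Finset.mem_univ, true_and, Set.mem_ofPred_eq,
        torusDist_le_iff] at hx
      simp only [Finset.mem_coe, Fintype.mem_piFinset, Finset.mem_Icc]
      intro i
      have := hx i
      omega) (fun x _ y _ hxy => by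
      ext i
      exact ZMod.injective_valMinAbs (congrFun hxy i))
  refine h.trans (le_of_eq ?_)
  rw [Fintype.card_piFinset_const]
  congr 1
  simp
  omega

/-! ### Bounds on the principal eigenvalue -/

lemma card_univ_torus (d N : ℕ) [NeZero N] :
    ((Finset.univ : Finset (Torus d N)).card : ℝ) = (N : ℝ) ^ d := by
  rw [Finset.card_univ, card_torus]; push_cast; rfl

lemma sum_sub_mean_sq {d N : ℕ} [NeZero N] (f : Torus d N → ℝ) :
    ∑ x, (f x - (∑ y, f y) / N ^ d) ^ 2 = ∑ x, f x ^ 2 - (∑ x, f x) ^ 2 / N ^ d := by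
  have hN : (0 : ℝ) < (N : ℝ) ^ d := pow_pos (by exact_mod_cast NeZero.pos N) d
  set m := (∑ y, f y) / (N : ℝ) ^ d with hm
  have e : ∀ x, (f x - m) ^ 2 = f x ^ 2 - 2 * m * f x + m ^ 2 := fun x => by ring
  simp_rw [e, Finset.sum_add_distrib, Finset.sum_sub_distrib, ← Finset.mul_sum, Finset.sum_const,
    nsmul_eq_mul, card_univ_torus, hm]
  field_simp
  ring

section cutoff

variable {d N : ℕ}

/-- A cutoff function which vanishes at distance at most `R` from the origin and equals one at
distance at least `2R`. -/
def cutoff (R : ℕ) (x : Torus d N) : ℝ :=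
  max 0 (min 1 (((torusDist 0 x : ℝ) - R) / R))

lemma cutoff_eq_zero {R : ℕ} {x : Torus d N} (h : torusDist 0 x ≤ R) : cutoff R x = 0 := by
  have h' : (torusDist 0 x : ℝ) ≤ R := by exact_mod_cast h
  refine max_eq_left ((min_le_right _ _).trans ?_)
  exact div_nonpos_of_nonpos_of_nonneg (by linarith) (by positivity)

lemma cutoff_eq_one {R : ℕ} (hR : 0 < R) {x : Torus d N} (h : 2 * R ≤ torusDist 0 x) :
    cutoff R x = 1 := by
  have h' : (2 * R : ℝ) ≤ torusDist 0 x := by exact_mod_cast h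
  have hR' : (0 : ℝ) < R := by exact_mod_cast hR
  rw [cutoff, min_eq_left, max_eq_right zero_le_one]
  rw [le_div_iff₀ hR']
  linarith

variable [NeZero N]

lemma cutoff_sub_sq_le {R : ℕ} (hR : 0 < R) (x : Torus d N) (i : Fin d) :
    (cutoff R (x + Pi.single i 1) - cutoff R x) ^ 2 ≤ 1 / (R : ℝ) ^ 2 := by
  have hR' : (0 : ℝ) < R := by exact_mod_cast hR
  have h1 : (torusDist 0 (x + Pi.single i 1) : ℝ) ≤ torusDist 0 x + 1 := by
    exact_mod_cast (torusDist_add_le _ _).trans (Nat.add_le_add_left (torusDist_single_le i) _)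
  have h2 : (torusDist 0 x : ℝ) ≤ torusDist 0 (x + Pi.single i 1) + 1 := by
    have := torusDist_add_le (x + Pi.single i 1) (-Pi.single i 1)
    rw [add_neg_cancel_right, torusDist_neg] at this
    exact_mod_cast this.trans (Nat.add_le_add_left (torusDist_single_le i) _)
  have h3 : |cutoff R (x + Pi.single i 1) - cutoff R x| ≤ 1 / R := by
    rw [cutoff, cutoff]
    refine (abs_max_sub_max_le_max _ _ _ _).trans ?_
    rw [sub_self, abs_zero]
    refine max_le (by positivity) ((abs_min_sub_min_le_max _ _ _ _).trans ?_)
    rw [sub_self, abs_zero]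
    refine max_le (by positivity) ?_
    rw [← sub_div, abs_div, abs_of_pos hR']
    gcongr
    rw [abs_le]
    constructor <;> linarith
  rw [← sq_abs, one_div, ← inv_pow, ← one_div]
  gcongr

lemma edgeEnergy_cutoff_le {R : ℕ} (hR : 0 < R) :
    edgeEnergy (cutoff R : Torus d N → ℝ) ≤ d * (5 * R) ^ d / R ^ 2 := by
  have hR' : (0 : ℝ) < R := by exact_mod_cast hR
  have h1 : ∀ i : Fin d, ∑ x : Torus d N, (cutoff R (x + Pi.single i 1) - cutoff R x) ^ 2 ≤
      (5 * R) ^ d / R ^ 2 := by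
    intro i
    calc ∑ x : Torus d N, (cutoff R (x + Pi.single i 1) - cutoff R x) ^ 2
        = ∑ x ∈ Finset.univ.filter (fun x : Torus d N => torusDist 0 x ≤ 2 * R),
            (cutoff R (x + Pi.single i 1) - cutoff R x) ^ 2 := by
          symm
          refine Finset.sum_filter_of_ne fun x _ hne => ?_
          by_contra! hx
          have h2 := torusDist_add_le (x + Pi.single i 1) (-Pi.single i 1)
          rw [add_neg_cancel_right, torusDist_neg] at h2
          have h3 := torusDist_single_le (N := N) i
          apply hne
          rw [cutoff_eq_one hR (by omega : 2 * R ≤ torusDist 0 x),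
            cutoff_eq_one hR (by omega : 2 * R ≤ torusDist 0 (x + Pi.single i 1))]
          simp
      _ ≤ (Finset.univ.filter (fun x : Torus d N => torusDist 0 x ≤ 2 * R)).card •
            (1 / (R : ℝ) ^ 2) := Finset.sum_le_card_nsmul _ _ _ fun x _ => cutoff_sub_sq_le hR x i
      _ ≤ (5 * R) ^ d * (1 / (R : ℝ) ^ 2) := by
          rw [nsmul_eq_mul]
          gcongr
          have := (card_torusDist_le (d := d) (N := N) (2 * R)).trans
            (Nat.pow_le_pow_left (by omega : 2 * (2 * R) + 1 ≤ 5 * R) d)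
          exact_mod_cast this
      _ = _ := by ring
  refine (Finset.sum_le_sum fun i _ => h1 i).trans (le_of_eq ?_)
  rw [Finset.sum_const, Finset.card_univ, Fintype.card_fin, nsmul_eq_mul]
  ring

lemma le_sum_cutoff_sq {R : ℕ} (hR : 0 < R) (hRN : 10 * R ≤ N) (hd : d ≠ 0) :
    (N : ℝ) ^ d / 2 ≤ ∑ x : Torus d N, cutoff R x ^ 2 := by
  have h1 : ∑ x : Torus d N, (1 : ℝ) ≤ ∑ x : Torus d N, (cutoff R x ^ 2 +
      if torusDist 0 x ≤ 2 * R then 1 else 0) := by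
    refine Finset.sum_le_sum fun x _ => ?_
    split_ifs with h
    · have := sq_nonneg (cutoff R x); linarith
    · rw [cutoff_eq_one hR (by omega)]; norm_num
  rw [Finset.sum_add_distrib, Finset.sum_const, nsmul_eq_mul, card_univ_torus, mul_one,
    Finset.sum_boole] at h1
  have h2 : ((Finset.univ.filter (fun x : Torus d N => torusDist 0 x ≤ 2 * R)).card : ℝ) ≤
      (5 * R : ℝ) ^ d := by
    have := (card_torusDist_le (d := d) (N := N) (2 * R)).trans
      (Nat.pow_le_pow_left (by omega : 2 * (2 * R) + 1 ≤ 5 * R) d)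
    exact_mod_cast this
  have h3 : (5 * R : ℝ) ^ d ≤ (N : ℝ) ^ d / 2 := by
    have h4 : (10 * R : ℝ) ≤ N := by exact_mod_cast hRN
    calc (5 * R : ℝ) ^ d ≤ ((N : ℝ) / 2) ^ d := by gcongr; linarith
      _ = (N : ℝ) ^ d / 2 ^ d := div_pow _ _ _
      _ ≤ (N : ℝ) ^ d / 2 := by
        gcongr
        exact le_self_pow₀ (by norm_num) hd
  linarith

end cutoff

namespace IsPrincipal

variable {d N : ℕ} [NeZero N] {B : Set (Torus d N)} {σ : Torus d N → ℝ} {l : ℝ}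

lemma edgeEnergy_eq (h : IsPrincipal B σ l) (hd : d ≠ 0) :
    edgeEnergy σ = 2 * d * (1 - l) * ∑ x, σ x ^ 2 := by
  have hd' : (0 : ℝ) < d := by exact_mod_cast Nat.pos_of_ne_zero hd
  have h1 := sum_mul_sub_avg hd σ
  have h2 : ∀ x, σ x * (σ x - avg σ x) = (1 - l) * σ x ^ 2 := by
    intro x
    by_cases hx : x ∈ B
    · simp [h.eq_zero x hx]
    · rw [h.avg_eq x hx]; ring
  simp_rw [h2, ← Finset.mul_sum] at h1
  rw [eq_div_iff (by positivity)] at h1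
  rw [← h1]; ring

lemma exists_pos (h : IsPrincipal B σ l) : ∃ x, 0 < σ x := by
  by_contra! h'
  have := h.sum_eq
  rw [Finset.sum_eq_zero fun x _ => le_antisymm (h' x) (h.nonneg x)] at this
  exact zero_ne_one this

lemma sum_sq_pos (h : IsPrincipal B σ l) : 0 < ∑ x, σ x ^ 2 := by
  obtain ⟨x, hx⟩ := h.exists_pos
  exact Finset.sum_pos' (fun _ _ => sq_nonneg _) ⟨x, Finset.mem_univ x, by positivity⟩

lemma eigenvalue_lt_one (h : IsPrincipal B σ l) (hd : d ≠ 0) (hB : B.Nonempty) : l < 1 := by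
  have hd' : (0 : ℝ) < d := by exact_mod_cast Nat.pos_of_ne_zero hd
  have hN : (0 : ℝ) < N := by exact_mod_cast NeZero.pos N
  obtain ⟨z, hz⟩ := hB
  have h1 := poincare σ
  rw [← sum_sub_mean_sq, h.sum_eq] at h1
  have h2 : 0 < ∑ x, (σ x - 1 / (N : ℝ) ^ d) ^ 2 := by
    refine Finset.sum_pos' (fun _ _ => sq_nonneg _) ⟨z, Finset.mem_univ z, ?_⟩
    rw [h.eq_zero z hz, zero_sub, neg_sq]
    positivity
  have h3 : 0 < edgeEnergy σ := pos_of_mul_pos_right (h2.trans_le h1) (by positivity)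
  rw [h.edgeEnergy_eq hd] at h3
  have h4 := pos_of_mul_pos_left h3 h.sum_sq_pos.le
  have := pos_of_mul_pos_right h4 (by positivity)
  linarith

lemma sq_mul_one_sub_le (h : IsPrincipal B σ l) (hd : 3 ≤ d) {R : ℕ} (hR : 0 < R)
    (hRN : 10 * R ≤ N) (hB : ∀ x ∈ B, torusDist 0 x ≤ R) :
    (N : ℝ) ^ 2 * (1 - l) ≤ 125 * (R / N) := by
  have hR' : (0 : ℝ) < R := by exact_mod_cast hR
  have hN : (0 : ℝ) < N := by exact_mod_cast NeZero.pos N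
  have hd0 : d ≠ 0 := by omega
  have hd' : (0 : ℝ) < d := by exact_mod_cast Nat.pos_of_ne_zero hd0
  have h1 := sum_mul_sub_avg hd0 (cutoff R : Torus d N → ℝ)
  have h2 := h.rayleigh (cutoff R) fun x hx => cutoff_eq_zero (hB x hx)
  simp_rw [mul_sub, Finset.sum_sub_distrib, ← pow_two] at h1
  have h3 := edgeEnergy_cutoff_le (d := d) (N := N) hR
  have h4 := le_sum_cutoff_sq (N := N) hR hRN hd0
  rcases le_total 1 l with hl | hl
  · have h5 : (N : ℝ) ^ 2 * (1 - l) ≤ 0 := mul_nonpos_of_nonneg_of_nonpos (by positivity)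
      (by linarith)
    exact h5.trans (by positivity)
  have h5 : (1 - l) * ((N : ℝ) ^ d / 2) ≤ (5 * R) ^ d / (2 * R ^ 2) := by
    calc (1 - l) * ((N : ℝ) ^ d / 2) ≤ (1 - l) * ∑ x : Torus d N, cutoff R x ^ 2 :=
          mul_le_mul_of_nonneg_left h4 (by linarith)
      _ ≤ edgeEnergy (cutoff R : Torus d N → ℝ) / (2 * d) := by rw [← h1]; linarith
      _ ≤ (d * (5 * R) ^ d / R ^ 2) / (2 * d) := by gcongr
      _ = _ := by field_simp
  obtain ⟨k, rfl⟩ := Nat.exists_eq_add_of_le hd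
  have h10 : 10 * (R : ℝ) ≤ N := by exact_mod_cast hRN
  have h6 : (5 * R : ℝ) ^ k ≤ (N : ℝ) ^ k := by gcongr; linarith
  have h7 : (5 * R : ℝ) ^ (3 + k) / (2 * R ^ 2) ≤ 125 / 2 * R * (N : ℝ) ^ k := by
    rw [pow_add, div_le_iff₀ (by positivity)]
    calc (5 * R : ℝ) ^ 3 * (5 * R) ^ k ≤ (5 * R : ℝ) ^ 3 * (N : ℝ) ^ k := by gcongr
      _ = _ := by ring
  have h8 := h5.trans h7
  rw [mul_div_assoc', le_div_iff₀ hN]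
  have hNk : (0 : ℝ) < (N : ℝ) ^ k := by positivity
  refine le_of_mul_le_mul_right ?_ hNk
  calc (N : ℝ) ^ 2 * (1 - l) * N * N ^ k = 2 * ((1 - l) * ((N : ℝ) ^ (3 + k) / 2)) := by ring
    _ ≤ 2 * (125 / 2 * R * (N : ℝ) ^ k) := by linarith
    _ = _ := by ring

lemma sum_sub_mean_sq_le (h : IsPrincipal B σ l) (hd : d ≠ 0) {δ : ℝ}
    (hδ : (N : ℝ) ^ 2 * (1 - l) ≤ δ) :
    ∑ x, (σ x - 1 / (N : ℝ) ^ d) ^ 2 ≤ d ^ 2 * δ * ∑ x, σ x ^ 2 := by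
  have h1 := poincare σ
  rw [← sum_sub_mean_sq, h.sum_eq, h.edgeEnergy_eq hd] at h1
  calc _ ≤ _ := h1
    _ = d ^ 2 * ((N : ℝ) ^ 2 * (1 - l)) * ∑ x, σ x ^ 2 := by ring
    _ ≤ _ := by
      have := h.sum_sq_pos
      gcongr

end IsPrincipal

/-! ### Spectral gap and decay of the killed semigroup -/

namespace IsPrincipal

variable {d N : ℕ} [NeZero N] {B : Set (Torus d N)} {σ : Torus d N → ℝ} {l : ℝ}

lemma sum_sq_le (h : IsPrincipal B σ l) (hd : d ≠ 0)
    (hδ : (d : ℝ) ^ 2 * ((N : ℝ) ^ 2 * (1 - l)) ≤ 1 / 4) :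
    ∑ x, σ x ^ 2 ≤ 4 / 3 / (N : ℝ) ^ d := by
  have h1 := h.sum_sub_mean_sq_le hd le_rfl
  have h2 := sum_sub_mean_sq σ
  rw [h.sum_eq] at h2
  rw [h2] at h1
  have h3 := mul_le_mul_of_nonneg_right hδ h.sum_sq_pos.le
  have e : (4 / 3 / (N : ℝ) ^ d) = 4 / 3 * (1 ^ 2 / (N : ℝ) ^ d) := by ring
  rw [e]
  linarith

lemma spectral_gap (h : IsPrincipal B σ l) (hd : d ≠ 0)
    (hδ : (d : ℝ) ^ 2 * ((N : ℝ) ^ 2 * (1 - l)) ≤ 1 / 4) {f : Torus d N → ℝ}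
    (hf : ∑ x, σ x * f x = 0) :
    ∑ x, f x * avg f x ≤ (1 - 1 / (2 * d ^ 2 * N ^ 2)) * ∑ x, f x ^ 2 := by
  have hd' : (0 : ℝ) < d := by exact_mod_cast Nat.pos_of_ne_zero hd
  have hN : (0 : ℝ) < N := by exact_mod_cast NeZero.pos N
  have h1 := poincare f
  have h2 := sum_mul_sub_avg hd f
  simp_rw [mul_sub, Finset.sum_sub_distrib, ← pow_two] at h2
  set F := ∑ x, f x ^ 2 with hF
  have hF0 : 0 ≤ F := Finset.sum_nonneg fun _ _ => sq_nonneg _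
  have h3 : (∑ x, f x) ^ 2 / (N : ℝ) ^ d ≤ F / 3 := by
    have e1 : (∑ x, f x) / (N : ℝ) ^ d = -∑ x, (σ x - 1 / (N : ℝ) ^ d) * f x := by
      simp_rw [sub_mul, Finset.sum_sub_distrib, hf, ← Finset.mul_sum]
      ring
    have e2 := Finset.sum_mul_sq_le_sq_mul_sq Finset.univ (fun x => σ x - 1 / (N : ℝ) ^ d) f
    have e3 : ((∑ x, f x) / (N : ℝ) ^ d) ^ 2 ≤ (1 / 3 / (N : ℝ) ^ d) * F := by
      rw [e1, neg_sq]
      refine e2.trans (mul_le_mul_of_nonneg_right ?_ hF0)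
      refine (h.sum_sub_mean_sq_le hd le_rfl).trans ?_
      calc _ ≤ 1 / 4 * ∑ x, σ x ^ 2 := mul_le_mul_of_nonneg_right hδ h.sum_sq_pos.le
        _ ≤ 1 / 4 * (4 / 3 / (N : ℝ) ^ d) := by gcongr; exact h.sum_sq_le hd hδ
        _ = _ := by ring
    calc (∑ x, f x) ^ 2 / (N : ℝ) ^ d = ((∑ x, f x) / (N : ℝ) ^ d) ^ 2 * (N : ℝ) ^ d := by
          field_simp
      _ ≤ (1 / 3 / (N : ℝ) ^ d) * F * (N : ℝ) ^ d := by gcongr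
      _ = F / 3 := by field_simp
  rw [eq_div_iff (by positivity)] at h2
  have h4 : F / 2 ≤ N ^ 2 * d / 2 * ((F - ∑ x, f x * avg f x) * (2 * d)) := by
    rw [h2]; linarith
  have h5 : F / (2 * d ^ 2 * N ^ 2) ≤ F - ∑ x, f x * avg f x := by
    rw [div_le_iff₀ (by positivity)]
    nlinarith
  have e : (1 - 1 / (2 * (d : ℝ) ^ 2 * N ^ 2)) * F = F - F / (2 * d ^ 2 * N ^ 2) := by ring
  rw [e]
  linarith

end IsPrincipal

section exp

variable {E : Type*} [NormedAddCommGroup E] [NormedSpace ℝ E] [CompleteSpace E]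

lemma hasSum_exp_smul_apply (T : E →L[ℝ] E) (t : ℝ) (w : E) :
    HasSum (fun n : ℕ => (t ^ n / n.factorial) • (T ^ n) w) (NormedSpace.exp (t • T) w) := by
  have h := (NormedSpace.exp_series_hasSum_exp' (𝕂 := ℝ) (t • T)).mapL
    (ContinuousLinearMap.apply ℝ E w)
  simp only [ContinuousLinearMap.apply_apply] at h
  convert h using 2 with n
  rw [smul_pow, smul_smul, smul_apply]
  congr 1
  ring

lemma exp_smul_apply_eq_zero (T : E →L[ℝ] E) (t : ℝ) (w : E) (φ : E →L[ℝ] ℝ)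
    (h : ∀ n, φ ((T ^ n) w) = 0) : φ (NormedSpace.exp (t • T) w) = 0 := by
  have h1 := (hasSum_exp_smul_apply T t w).mapL φ
  simp only [map_smul, h, smul_zero] at h1
  exact h1.unique hasSum_zero

lemma exp_smul_apply_of_eigenvector (T : E →L[ℝ] E) (t : ℝ) {w : E} {l : ℝ} (h : T w = l • w) :
    NormedSpace.exp (t • T) w = Real.exp (t * l) • w := by
  have hn : ∀ n : ℕ, (T ^ n) w = l ^ n • w := by
    intro n
    induction n with
    | zero => simp
    | succ n ih => rw [pow_succ', mul_apply_eq_comp, ih, map_smul, h, smul_smul, pow_succ]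
  refine (hasSum_exp_smul_apply T t w).unique ?_
  have h1 := (NormedSpace.exp_series_hasSum_exp' (𝕂 := ℝ) (t * l)).smul_const w
  rw [← Real.exp_eq_exp_ℝ] at h1
  convert h1 using 2 with n
  rw [hn, smul_smul, mul_pow, smul_eq_mul]
  congr 1
  ring

end exp

lemma norm_exp_smul_apply_le {E : Type*} [NormedAddCommGroup E] [InnerProductSpace ℝ E]
    [CompleteSpace E] (T : E →L[ℝ] E) (w : E) (c : ℝ)
    (h : ∀ t : ℝ, inner ℝ (NormedSpace.exp (t • T) w) (T (NormedSpace.exp (t • T) w)) ≤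
      c * ‖NormedSpace.exp (t • T) w‖ ^ 2) {t : ℝ} (ht : 0 ≤ t) :
    ‖NormedSpace.exp (t • T) w‖ ≤ Real.exp (c * t) * ‖w‖ := by
  have hu : ∀ t, HasDerivAt (fun t : ℝ => NormedSpace.exp (t • T) w)
      (T (NormedSpace.exp (t • T) w)) t := fun t => by
    have := (ContinuousLinearMap.apply ℝ E w).hasFDerivAt.comp_hasDerivAt t
      (hasDerivAt_exp_smul_const' T t)
    exact this
  have hφ : ∀ t, HasDerivAt (fun t : ℝ => ‖NormedSpace.exp (t • T) w‖ ^ 2 * Real.exp (-(2 * c) * t))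
      (2 * inner ℝ (NormedSpace.exp (t • T) w) (T (NormedSpace.exp (t • T) w)) *
        Real.exp (-(2 * c) * t) +
        ‖NormedSpace.exp (t • T) w‖ ^ 2 * (Real.exp (-(2 * c) * t) * (-(2 * c)))) t := fun t =>
    (hu t).norm_sq.mul (by simpa using ((hasDerivAt_id t).const_mul (-(2 * c))).exp)
  have hanti := antitone_of_deriv_nonpos (fun t => (hφ t).differentiableAt) fun t => by
    rw [(hφ t).deriv]
    have := h t
    have h2 := Real.exp_pos (-(2 * c) * t)
    nlinarith
  have h0 := hanti ht
  simp only [zero_smul, NormedSpace.exp_zero, mul_zero, Real.exp_zero, mul_one,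
    one_apply_eq_self] at h0
  refine abs_le_of_sq_le_sq' ?_ (by positivity) |>.2
  rw [mul_pow, ← Real.exp_nat_mul]
  calc ‖NormedSpace.exp (t • T) w‖ ^ 2 = ‖NormedSpace.exp (t • T) w‖ ^ 2 *
        Real.exp (-(2 * c) * t) * Real.exp ((2 : ℕ) * (c * t)) := by
        rw [mul_assoc, ← Real.exp_add]
        simp only [Nat.cast_ofNat]
        rw [show -(2 * c) * t + 2 * (c * t) = 0 by ring, Real.exp_zero, mul_one]
    _ ≤ ‖w‖ ^ 2 * Real.exp ((2 : ℕ) * (c * t)) := by gcongr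
    _ = _ := mul_comm _ _

/-- The transition probabilities of the continuous-time walk killed on `B`. -/
def killHeat {d N : ℕ} [NeZero N] (B : Set (Torus d N)) (t : ℝ) (x y : Torus d N) : ℝ :=
  Real.exp (-t) * (NormedSpace.exp (t • killOp B) (EuclideanSpace.single x (1 : ℝ))) y

lemma hasSum_killHeat {d N : ℕ} [NeZero N] (B : Set (Torus d N)) (t : ℝ) (x y : Torus d N) :
    HasSum (fun n => poissonWeight t n * ((killOp B ^ n) (EuclideanSpace.single x 1)) y)
      (killHeat B t x y) := by
  have h := ((hasSum_exp_smul_apply (killOp B) t (EuclideanSpace.single x (1 : ℝ))).mapL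
    (EuclideanSpace.proj y)).mul_left (Real.exp (-t))
  have e : (fun n => poissonWeight t n * ((killOp B ^ n) (EuclideanSpace.single x 1)) y) =
      fun n => Real.exp (-t) * EuclideanSpace.proj (𝕜 := ℝ) y ((t ^ n / (n.factorial : ℝ)) •
        (killOp B ^ n) (EuclideanSpace.single x (1 : ℝ))) := by
    funext n
    rw [PiLp.proj_apply, PiLp.smul_apply, poissonWeight, smul_eq_mul, mul_assoc]
  rw [e]
  exact h

lemma IsPrincipal.abs_killHeat_sub_le {d N : ℕ} [NeZero N] {B : Set (Torus d N)}
    {σ : Torus d N → ℝ} {l : ℝ} (h : IsPrincipal B σ l) (hd : d ≠ 0)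
    (hδ : (d : ℝ) ^ 2 * ((N : ℝ) ^ 2 * (1 - l)) ≤ 1 / 4) {t : ℝ} (ht : 0 ≤ t)
    {x : Torus d N} (hx : x ∉ B) (y : Torus d N) :
    |killHeat B t x y - σ x / (∑ z, σ z ^ 2) * Real.exp (-((1 - l) * t)) * σ y| ≤
      Real.exp (-(1 / (2 * d ^ 2 * N ^ 2) * t)) := by
  set S := ∑ z, σ z ^ 2 with hS
  have hS0 : 0 < S := h.sum_sq_pos
  set s : EuclideanSpace ℝ (Torus d N) := WithLp.toLp 2 σ with hs
  set T := killOp B with hT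
  have hTs : T s = l • s := by
    ext z
    rw [hT, killOp_apply]
    by_cases hz : z ∈ B
    · simp [killAvg, hz, hs, h.eq_zero z hz]
    · rw [killAvg_eq_avg h.eq_zero hz, h.avg_eq z hz]; rfl
  set w := EuclideanSpace.single x (1 : ℝ) - (σ x / S) • s with hw
  have hsw : inner ℝ s w = 0 := by
    rw [hw, inner_sub_right, inner_smul_right, inner_eq_sum, inner_eq_sum]
    simp only [hs, ← pow_two, ← hS]
    rw [div_mul_cancel₀ _ hS0.ne']
    simp
  have hwB : ∀ z ∈ B, w z = 0 := fun z hz => by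
    have hzx : z ≠ x := fun e => hx (e ▸ hz)
    simp [hw, hs, hzx, h.eq_zero z hz]
  have hw1 : ‖w‖ ≤ 1 := by
    have h1 : ‖w‖ ^ 2 ≤ 1 := by
      rw [← real_inner_self_eq_norm_sq]
      nth_rewrite 1 [hw]
      rw [inner_sub_left, inner_smul_left, hsw, mul_zero, sub_zero, inner_eq_sum]
      simp only [PiLp.single_apply, ite_mul, one_mul, zero_mul, Finset.sum_ite_eq', Finset.mem_univ,
        if_true]
      have : 0 ≤ σ x / S * σ x := mul_nonneg (div_nonneg (h.nonneg x) hS0.le) (h.nonneg x)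
      simp [hw, hs]
      exact this
    nlinarith [norm_nonneg w]
  have hsT : ∀ f, inner ℝ s (T f) = l * inner ℝ s f := fun f => by
    have := killOp_isSymmetric B s f
    simp only [ContinuousLinearMap.coe_coe] at this
    rw [← this, ← hT, hTs, inner_smul_left]
    simp
  have hdecay : ‖NormedSpace.exp (t • T) w‖ ≤ Real.exp ((1 - 1 / (2 * d ^ 2 * N ^ 2)) * t) := by
    refine (norm_exp_smul_apply_le T w _ (fun r => ?_) ht).trans
      (mul_le_of_le_one_right (Real.exp_pos _).le hw1)
    set u := NormedSpace.exp (r • T) w with hu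
    have h1 : inner ℝ s u = 0 := by
      have := exp_smul_apply_eq_zero T r w (innerSL ℝ s) fun n => by
        rw [innerSL_apply_apply]
        induction n with
        | zero => simpa using hsw
        | succ n ih => rw [pow_succ', mul_apply_eq_comp, hsT, ih, mul_zero]
      rwa [innerSL_apply_apply] at this
    have h2 : ∀ z ∈ B, u z = 0 := fun z hz => by
      have := exp_smul_apply_eq_zero T r w (EuclideanSpace.proj z) fun n => by
        rw [PiLp.proj_apply]
        cases n with
        | zero => simpa using hwB z hz
        | succ n => rw [pow_succ', mul_apply_eq_comp, hT, killOp_apply, killAvg, if_pos hz]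
      rwa [PiLp.proj_apply] at this
    rw [inner_eq_sum] at h1
    rw [inner_eq_sum, EuclideanSpace.norm_sq_eq]
    simp only [Real.norm_eq_abs, sq_abs]
    refine le_trans (le_of_eq ?_) (h.spectral_gap hd hδ h1)
    exact sum_mul_killAvg h2 h2
  have hdec : EuclideanSpace.single x (1 : ℝ) = (σ x / S) • s + w := by rw [hw]; abel
  have he : killHeat B t x y - σ x / S * Real.exp (-((1 - l) * t)) * σ y =
      Real.exp (-t) * (NormedSpace.exp (t • T) w) y := by
    rw [killHeat, hdec, map_add, map_smul, exp_smul_apply_of_eigenvector T t hTs,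
      PiLp.add_apply, PiLp.smul_apply, PiLp.smul_apply,
      show -((1 - l) * t) = -t + t * l by ring, Real.exp_add, smul_eq_mul, smul_eq_mul]
    simp only [hs]
    ring
  rw [he, abs_mul, abs_of_pos (Real.exp_pos _)]
  calc Real.exp (-t) * |(NormedSpace.exp (t • T) w) y|
      ≤ Real.exp (-t) * Real.exp ((1 - 1 / (2 * d ^ 2 * N ^ 2)) * t) := by
        gcongr
        exact (PiLp.norm_apply_le _ y).trans hdecay
    _ = _ := by rw [← Real.exp_add]; congr 1; ring

/-! ### Superharmonic functions on the lattice -/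

section lattice

variable {d : ℕ}

lemma avg_le_iff {R : Type*} [AddGroupWithOne R] (hd : 0 < d) (f : (Fin d → R) → ℝ)
    (x : Fin d → R) (a : ℝ) :
    avg f x ≤ a ↔ ∑ i : Fin d, ((f (x + Pi.single i 1) - a) + (f (x - Pi.single i 1) - a)) ≤ 0 := by
  have hd' : (0 : ℝ) < d := by exact_mod_cast hd
  rw [avg, div_le_iff₀ (by positivity)]
  simp only [Finset.sum_add_distrib, Finset.sum_sub_distrib, Finset.sum_const, Finset.card_univ,
    Fintype.card_fin, nsmul_eq_mul]
  constructor <;> intro h <;> linarith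

lemma avg_sub {R : Type*} [AddGroupWithOne R] (f g : (Fin d → R) → ℝ) (x : Fin d → R) :
    avg (fun y => f y - g y) x = avg f x - avg g x := by
  rw [avg, avg, avg, ← sub_div, ← Finset.sum_sub_distrib]
  congr 1
  exact Finset.sum_congr rfl fun i _ => by ring

lemma avg_const_mul {R : Type*} [AddGroupWithOne R] (c : ℝ) (f : (Fin d → R) → ℝ)
    (x : Fin d → R) : avg (fun y => c * f y) x = c * avg f x := by
  rw [avg, avg, ← mul_div_assoc, Finset.mul_sum]
  congr 1
  exact Finset.sum_congr rfl fun i _ => by ring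

lemma avg_const {R : Type*} [AddGroupWithOne R] (hd : 0 < d) (c : ℝ) (x : Fin d → R) :
    avg (fun _ => c) x = c := by
  have hd' : (0 : ℝ) < d := by exact_mod_cast hd
  simp only [avg, Finset.sum_const, Finset.card_univ, Fintype.card_fin, nsmul_eq_mul]
  field_simp
  ring

/-- Minimum principle: a function which is superharmonic on a finite set and non-negative on its
neighbours is non-negative. -/
lemma minimum_principle (hd : 0 < d) {S : Set (Lat d)} (hS : S.Finite) {w : Lat d → ℝ}
    (hsup : ∀ u ∈ S, avg w u ≤ w u)
    (hbd : ∀ u ∈ S, ∀ i : Fin d, (u + Pi.single i 1 ∉ S → 0 ≤ w (u + Pi.single i 1)) ∧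
      (u - Pi.single i 1 ∉ S → 0 ≤ w (u - Pi.single i 1))) :
    ∀ u ∈ S, 0 ≤ w u := by
  by_contra! hcon
  obtain ⟨u₀, hu₀, hneg⟩ := hcon
  obtain ⟨u₁, hu₁, hmin⟩ := hS.toFinset.exists_min_image w ⟨u₀, by simpa using hu₀⟩
  simp only [Set.Finite.mem_toFinset] at hu₁ hmin
  have hm : w u₁ < 0 := (hmin u₀ hu₀).trans_lt hneg
  let i₀ : Fin d := ⟨0, hd⟩
  obtain ⟨u, hu, hmax⟩ := (hS.toFinset.filter fun u => w u = w u₁).exists_max_image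
    (fun u => u i₀) ⟨u₁, by simpa using hu₁⟩
  simp only [Finset.mem_filter, Set.Finite.mem_toFinset] at hu hmax
  have hnb : ∀ i : Fin d, 0 ≤ w (u + Pi.single i 1) - w u ∧ 0 ≤ w (u - Pi.single i 1) - w u := by
    intro i
    rw [hu.2]
    constructor
    · by_cases h : u + Pi.single i 1 ∈ S
      · linarith [hmin _ h]
      · linarith [(hbd u hu.1 i).1 h]
    · by_cases h : u - Pi.single i 1 ∈ S
      · linarith [hmin _ h]
      · linarith [(hbd u hu.1 i).2 h]
  have h1 := (avg_le_iff hd w u _).mp (hsup u hu.1)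
  have h2 := (Finset.sum_eq_zero_iff_of_nonneg fun i _ => add_nonneg (hnb i).1 (hnb i).2).mp
    (le_antisymm h1 (Finset.sum_nonneg fun i _ => add_nonneg (hnb i).1 (hnb i).2)) i₀
    (Finset.mem_univ _)
  have h3 : w (u + Pi.single i₀ 1) = w u := by linarith [(hnb i₀).1, (hnb i₀).2]
  have h4 : u + Pi.single i₀ 1 ∈ S := by
    by_contra h
    have := (hbd u hu.1 i₀).1 h
    rw [h3, hu.2] at this
    linarith
  have h5 := hmax _ ⟨h4, h3.trans hu.2⟩
  simp at h5

/-- The `ℓ∞`-norm on the lattice. -/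
def latNorm (u : Lat d) : ℕ := Finset.univ.sup fun i => (u i).natAbs

lemma natAbs_le_latNorm (u : Lat d) (i : Fin d) : (u i).natAbs ≤ latNorm u :=
  Finset.le_sup (f := fun i => (u i).natAbs) (Finset.mem_univ i)

lemma latNorm_le_iff {u : Lat d} {m : ℕ} : latNorm u ≤ m ↔ ∀ i, (u i).natAbs ≤ m := by
  simp [latNorm, Finset.sup_le_iff]

lemma latNorm_add_le (u v : Lat d) : latNorm (u + v) ≤ latNorm u + latNorm v := by
  rw [latNorm_le_iff]
  intro i
  exact (Int.natAbs_add_le _ _).trans (add_le_add (natAbs_le_latNorm u i) (natAbs_le_latNorm v i))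

lemma latNorm_single (i : Fin d) : latNorm (Pi.single i 1 : Lat d) ≤ 1 := by
  rw [latNorm_le_iff]
  intro j
  by_cases hj : j = i
  · subst hj; simp
  · simp [hj]

lemma latNorm_neg (u : Lat d) : latNorm (-u) = latNorm u := by simp [latNorm]

lemma finite_latNorm_le (m : ℕ) : {u : Lat d | latNorm u ≤ m}.Finite := by
  refine (Set.Finite.pi (ι := Fin d) (t := fun _ => Set.Icc (-(m : ℤ)) m)
    fun _ => Set.finite_Icc _ _).subset fun u hu => ?_
  simp only [Set.mem_ofPred_eq, latNorm_le_iff] at hu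
  simp only [Set.mem_pi, Set.mem_univ, Set.mem_Icc, forall_const]
  intro i
  have := hu i
  omega

/-- Comparison of a superharmonic function with the `ℓ∞`-norm in an annulus. -/
lemma le_of_superharmonic_annulus (hd : 0 < d) {g : Lat d → ℝ} {R m : ℕ} {s : ℝ} (hs : 0 ≤ s)
    (hm : 0 < m) (hg : ∀ u, 0 ≤ g u)
    (hsup : ∀ u, R < latNorm u → latNorm u < m → avg g u ≤ g u)
    (hbd : ∀ u, latNorm u = m → s ≤ g u) {u : Lat d} (hu : R < latNorm u) (hu' : latNorm u < m) :
    s / m ≤ g u := by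
  have hm' : (0 : ℝ) < m := by exact_mod_cast hm
  have key : ∀ v ∈ {v : Lat d | R < latNorm v ∧ latNorm v < m},
      0 ≤ g v - s / m * ((latNorm v : ℝ) - R) := by
    have hout : ∀ v : Lat d, latNorm v ≤ m → ¬ (R < latNorm v ∧ latNorm v < m) →
        0 ≤ g v - s / m * ((latNorm v : ℝ) - R) := by
      intro v hv h
      rcases Nat.lt_or_ge R (latNorm v) with h1 | h1
      · have h2 : latNorm v = m := by omega
        have h3 := hbd v h2
        rw [h2]
        have : s / m * ((m : ℝ) - R) ≤ s := by
          calc s / m * ((m : ℝ) - R) ≤ s / m * m := by gcongr; linarith [Nat.cast_nonneg (α := ℝ) R]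
            _ = s := div_mul_cancel₀ _ hm'.ne'
        linarith
      · have h2 : (latNorm v : ℝ) ≤ R := by exact_mod_cast h1
        have : s / m * ((latNorm v : ℝ) - R) ≤ 0 :=
          mul_nonpos_of_nonneg_of_nonpos (by positivity) (by linarith)
        linarith [hg v]
    refine minimum_principle hd ((finite_latNorm_le m).subset fun v hv => hv.2.le) ?_ ?_
    · rintro v ⟨hv1, hv2⟩
      rw [avg_sub, avg_const_mul, avg_sub, avg_const hd]
      have h1 := hsup v hv1 hv2
      have h2 : (latNorm v : ℝ) ≤ avg (fun u : Lat d => (latNorm u : ℝ)) v := by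
        rw [avg, le_div_iff₀ (by positivity)]
        have : ∑ i : Fin d, (2 * latNorm v : ℝ) = latNorm v * (2 * d) := by
          simp; ring
        rw [← this]
        refine Finset.sum_le_sum fun i _ => ?_
        have h3 := latNorm_add_le (v + Pi.single i 1) (v - Pi.single i 1)
        have h4 : 2 * latNorm v ≤ latNorm (v + Pi.single i 1 + (v - Pi.single i 1)) := by
          rw [show v + Pi.single i 1 + (v - Pi.single i 1) = v + v by abel]
          have h5 : latNorm v ≤ latNorm (v + v) / 2 := by
            rw [latNorm_le_iff]
            intro j
            have h6 := natAbs_le_latNorm (v + v) j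
            simp only [Pi.add_apply] at h6
            omega
          omega
        exact_mod_cast h4.trans h3
      gcongr
    · rintro v ⟨hv1, hv2⟩ i
      have h1 := latNorm_single (d := d) i
      constructor
      · intro h
        have := latNorm_add_le v (Pi.single i 1)
        exact hout _ (by omega) h
      · intro h
        have := latNorm_add_le v (-Pi.single i 1)
        rw [latNorm_neg, ← sub_eq_add_neg] at this
        exact hout _ (by omega) h
  have h1 := key u ⟨hu, hu'⟩
  have h2 : s / m * 1 ≤ s / m * ((latNorm u : ℝ) - R) := by
    gcongr
    have : ((R + 1 : ℕ) : ℝ) ≤ latNorm u := by exact_mod_cast hu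
    push_cast at this
    linarith
  linarith

/-- The squared Euclidean norm on the lattice. -/
def latSq (u : Lat d) : ℤ := ∑ i, u i ^ 2

lemma latSq_nonneg (u : Lat d) : 0 ≤ latSq u := Finset.sum_nonneg fun _ _ => sq_nonneg _

lemma sq_le_latSq (u : Lat d) (i : Fin d) : u i ^ 2 ≤ latSq u :=
  Finset.single_le_sum (f := fun i => u i ^ 2) (fun _ _ => sq_nonneg _) (Finset.mem_univ i)

lemma latSq_add_single (u : Lat d) (i : Fin d) (a : ℤ) :
    latSq (u + Pi.single i a) = latSq u + 2 * a * u i + a ^ 2 := by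
  have h : ∀ j, (u + Pi.single i a : Lat d) j ^ 2 = u j ^ 2 + if j = i then 2 * a * u i + a ^ 2 else 0 := by
    intro j
    by_cases hj : j = i
    · subst hj; simp; ring
    · simp [hj]
  rw [latSq, Finset.sum_congr rfl fun j _ => h j, Finset.sum_add_distrib, latSq]
  simp
  ring

lemma latSq_sub_single (u : Lat d) (i : Fin d) (a : ℤ) :
    latSq (u - Pi.single i a) = latSq u - 2 * a * u i + a ^ 2 := by
  rw [sub_eq_add_neg, ← Pi.single_neg, latSq_add_single]; ring

lemma natAbs_sum_le_latSq (u : Lat d) : ((∑ i, (u i).natAbs : ℕ) : ℤ) ≤ latSq u := by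
  push_cast
  refine Finset.sum_le_sum fun i _ => ?_
  rw [← sq_abs]
  nlinarith [abs_nonneg (u i), Int.natAbs_mul_self' (u i), sq_nonneg (|u i|), Int.le_self_sq |u i|]

lemma le_of_superharmonic_path (hd : 0 < d) {g : Lat d → ℝ} {M : ℤ} (hg : ∀ u, 0 ≤ g u)
    (hsup : ∀ u, latSq u < M → avg g u ≤ g u) (n : ℕ) (u : Lat d)
    (hn : ∑ i, (u i).natAbs = n) (hu : latSq u < M) : g 0 / (2 * d) ^ n ≤ g u := by
  have hd' : (0 : ℝ) < d := by exact_mod_cast hd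
  induction n generalizing u with
  | zero =>
    have : u = 0 := by
      ext i
      have := (Finset.sum_eq_zero_iff.mp hn) i (Finset.mem_univ i)
      simpa using this
    simp [this]
  | succ n ih =>
    have hex : ∃ i, u i ≠ 0 := by
      by_contra! h
      simp [h] at hn
    obtain ⟨i, hi⟩ := hex
    have hsum : ∀ a : ℤ, ∑ j, ((u + Pi.single i a : Lat d) j).natAbs + (u i).natAbs =
        ∑ j, (u j).natAbs + (u i + a).natAbs := by
      intro a
      rw [← Finset.add_sum_erase _ _ (Finset.mem_univ i),
        ← Finset.add_sum_erase Finset.univ (fun j => (u j).natAbs) (Finset.mem_univ i)]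
      have : ∑ j ∈ Finset.univ.erase i, ((u + Pi.single i a : Lat d) j).natAbs =
          ∑ j ∈ Finset.univ.erase i, (u j).natAbs :=
        Finset.sum_congr rfl fun j hj => by simp [Finset.ne_of_mem_erase hj]
      rw [this]
      simp
      omega
    have hstep : ∀ v, (∃ i, v = u + Pi.single i 1 ∨ v = u - Pi.single i 1) → g v / (2 * d) ≤ g u := by
      rintro v ⟨i, hv⟩
      refine le_trans ?_ (hsup u hu)
      rw [avg]
      gcongr
      refine le_trans ?_ (Finset.single_le_sum
        (f := fun i => g (u + Pi.single i 1) + g (u - Pi.single i 1))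
        (fun j _ => add_nonneg (hg _) (hg _)) (Finset.mem_univ i))
      rcases hv with rfl | rfl
      · exact le_add_of_nonneg_right (hg _)
      · exact le_add_of_nonneg_left (hg _)
    have hfin : ∀ a : ℤ, (u i + a).natAbs + 1 = (u i).natAbs → 2 * a * u i + a ^ 2 ≤ 0 →
        (u + Pi.single i a = u + Pi.single i 1 ∨ u + Pi.single i a = u - Pi.single i 1) →
        g 0 / (2 * d) ^ (n + 1) ≤ g u := by
      intro a ha1 ha2 ha3
      have h1 := hsum a
      have h2 := ih (u + Pi.single i a) (by omega) (by rw [latSq_add_single]; omega)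
      refine le_trans ?_ (hstep _ ⟨i, ha3⟩)
      rw [pow_succ, ← div_div]
      gcongr
    rcases lt_or_gt_of_ne hi with h | h
    · exact hfin 1 (by omega) (by omega) (Or.inl rfl)
    · exact hfin (-1) (by omega) (by omega) (Or.inr (by rw [Pi.single_neg, sub_eq_add_neg]))

lemma taylor_le_inv_pow (a : ℕ) {q : ℝ} (hq : -1 < q) :
    1 - a * q + a * (a + 1) / 2 * q ^ 2 - a * (a + 1) * (a + 2) / 6 * q ^ 3 ≤ ((1 + q) ^ a)⁻¹ := by
  have h1 : 0 < 1 + q := by linarith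
  induction a with
  | zero => simp
  | succ a ih =>
    rw [pow_succ (1 + q) a, mul_inv, ← div_eq_mul_inv, le_div_iff₀ h1]
    refine le_trans ?_ ih
    push_cast
    have : 0 ≤ ((a : ℝ) + 1) * (a + 2) * (a + 3) / 6 * q ^ 4 := by positivity
    linarith

/-- The function `|u|^{-2d}` is subharmonic away from the origin. -/
lemma inv_latSq_pow_le_avg (hd : 0 < d) {u : Lat d} (hu : 4 * ((d : ℤ) + 2) ≤ latSq u) :
    (((latSq u : ℤ) : ℝ) ^ d)⁻¹ ≤ avg (fun v : Lat d => (((latSq v : ℤ) : ℝ) ^ d)⁻¹) u := by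
  have hd' : (0 : ℝ) < d := by exact_mod_cast hd
  set r : ℝ := ((latSq u : ℤ) : ℝ) with hr
  have hur : 4 * ((d : ℝ) + 2) ≤ r := by rw [hr]; exact_mod_cast hu
  have hr0 : 0 < r := by linarith
  have hsum : ∑ i, ((u i : ℤ) : ℝ) ^ 2 = r := by rw [hr, latSq]; push_cast; rfl
  have hterm : ∀ (i : Fin d) (b : ℝ), b = 1 + 2 * u i ∨ b = 1 - 2 * u i →
      (r ^ d)⁻¹ * (1 - d * (b / r) + d * (d + 1) / 2 * (b / r) ^ 2 -
        d * (d + 1) * (d + 2) / 6 * (b / r) ^ 3) ≤ ((r + b) ^ d)⁻¹ := by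
    intro i b hb
    have hui : ((u i : ℤ) : ℝ) ^ 2 ≤ r := by rw [hr]; exact_mod_cast sq_le_latSq u i
    have hb1 : -1 < b / r := by
      rw [lt_div_iff₀ hr0]
      rcases hb with rfl | rfl
      · nlinarith [sq_nonneg ((u i : ℝ) + 1)]
      · nlinarith [sq_nonneg ((u i : ℝ) - 1)]
    have h := taylor_le_inv_pow d hb1
    have e : r + b = r * (1 + b / r) := by field_simp
    rw [e, mul_pow, mul_inv]
    gcongr
  rw [avg, le_div_iff₀ (by positivity)]
  have h1 : ∀ i : Fin d,
      (r ^ d)⁻¹ * (2 - d * (2 / r) + d * (d + 1) / 2 * ((2 + 8 * (u i : ℝ) ^ 2) / r ^ 2) -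
        d * (d + 1) * (d + 2) / 6 * ((2 + 24 * (u i : ℝ) ^ 2) / r ^ 3)) ≤
      (((latSq (u + Pi.single i 1) : ℤ) : ℝ) ^ d)⁻¹ +
      (((latSq (u - Pi.single i 1) : ℤ) : ℝ) ^ d)⁻¹ := by
    intro i
    have e1 := hterm i _ (Or.inl rfl)
    have e2 := hterm i _ (Or.inr rfl)
    rw [latSq_add_single, latSq_sub_single]
    push_cast
    rw [← hr, show r + 2 * (u i : ℝ) + 1 = r + (1 + 2 * u i) by ring,
      show r - 2 * (u i : ℝ) + 1 = r + (1 - 2 * u i) by ring]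
    refine le_trans (le_of_eq ?_) (add_le_add e1 e2)
    ring
  refine le_trans ?_ (Finset.sum_le_sum fun i _ => h1 i)
  rw [← Finset.mul_sum]
  refine mul_le_mul_of_nonneg_left ?_ (by positivity)
  simp_rw [Finset.sum_sub_distrib, Finset.sum_add_distrib, Finset.sum_sub_distrib,
    ← Finset.mul_sum, ← Finset.sum_div, Finset.sum_add_distrib, ← Finset.mul_sum, hsum,
    Finset.sum_const, Finset.card_univ, Fintype.card_fin, nsmul_eq_mul]
  have h2 : 0 ≤ -(d * (d * (2 / r))) + d * (d + 1) / 2 * ((d * 2 + 8 * r) / r ^ 2) -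
      d * (d + 1) * (d + 2) / 6 * ((d * 2 + 24 * r) / r ^ 3) := by
    have e : -(d * (d * (2 / r))) + d * (d + 1) / 2 * ((d * 2 + 8 * r) / r ^ 2) -
      d * (d + 1) * (d + 2) / 6 * ((d * 2 + 24 * r) / r ^ 3) = d / r ^ 3 *
        ((2 * d + 4) * r ^ 2 + d * (d + 1) * r - (d + 1) * (d + 2) / 3 * (d + 12 * r)) := by
      field_simp
      ring
    rw [e]
    refine mul_nonneg (by positivity) ?_
    have f1 : (d : ℝ) + 12 * r ≤ 13 * r := by linarith
    have f2 : ((d : ℝ) + 1) * (d + 2) / 3 * (d + 12 * r) ≤ (d + 1) * (d + 2) / 3 * (13 * r) := by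
      gcongr
    have f3 : (2 * (d : ℝ) + 4) * (r * (4 * (d + 2))) ≤ (2 * d + 4) * r ^ 2 := by
      rw [pow_two]; gcongr
    have f4 : ((d : ℝ) + 1) * (d + 2) / 3 * (13 * r) ≤ (2 * (d : ℝ) + 4) * (r * (4 * (d + 2))) := by
      have : 0 ≤ r * (d + 2) * (8 * (d + 2) - 13 / 3 * (d + 1)) := by
        have : 0 ≤ 8 * ((d : ℝ) + 2) - 13 / 3 * (d + 1) := by linarith
        positivity
      linarith
    have : 0 ≤ (d : ℝ) * (d + 1) * r := by positivity
    linarith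
  have h3 : (d : ℝ) * (d * 2 / r) = d * (d * (2 / r)) := by ring
  linarith

/-- A non-negative function which is superharmonic in a ball around the origin is bounded below
polynomially by its value at the origin. -/
lemma le_of_superharmonic_ball (hd : 0 < d) {g : Lat d → ℝ} {L : ℕ} (hL : 4 * (d + 2) < L ^ 2)
    (hg : ∀ u, 0 ≤ g u) (hsup : ∀ u, latSq u < (L : ℤ) ^ 2 → avg g u ≤ g u) {u : Lat d}
    (hu : 4 * latSq u ≤ (L : ℤ) ^ 2) :
    g 0 / (2 * d) ^ (4 * (d + 2)) / (L : ℝ) ^ (2 * d) ≤ g u := by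
  have hd' : (0 : ℝ) < d := by exact_mod_cast hd
  have hd1 : (1 : ℝ) ≤ d := by exact_mod_cast hd
  have hL0 : 0 < L := Nat.pos_of_ne_zero fun h => by simp [h] at hL
  have hL1 : (1 : ℝ) ≤ L := by exact_mod_cast hL0
  have hLZ : 4 * ((d : ℤ) + 2) < (L : ℤ) ^ 2 := by exact_mod_cast hL
  set K := g 0 / (2 * d) ^ (4 * (d + 2)) with hK
  have hK0 : 0 ≤ K := div_nonneg (hg 0) (by positivity)
  have hnear : ∀ v : Lat d, latSq v ≤ 4 * ((d : ℤ) + 2) → K ≤ g v := by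
    intro v hv
    refine le_trans ?_ (le_of_superharmonic_path hd hg hsup _ v rfl (by omega))
    rw [hK]
    have := hg 0
    gcongr
    · linarith
    · have := natAbs_sum_le_latSq v
      omega
  have hpow : (1 : ℝ) ≤ (L : ℝ) ^ (2 * d) := one_le_pow₀ hL1
  rcases le_or_gt (latSq u) (4 * ((d : ℤ) + 2)) with hu1 | hu1
  · exact (div_le_self hK0 hpow).trans (hnear u hu1)
  have hS : {v : Lat d | 4 * ((d : ℤ) + 2) < latSq v ∧ latSq v < (L : ℤ) ^ 2}.Finite := by
    refine (finite_latNorm_le L).subset fun v hv => ?_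
    rw [Set.mem_ofPred_eq, latNorm_le_iff]
    intro i
    have h1 := (sq_le_latSq v i).trans hv.2.le
    have h2 := abs_le_of_sq_le_sq h1 (by positivity)
    rw [Int.abs_eq_natAbs] at h2
    omega
  have key := minimum_principle hd hS
    (w := fun v => g v - K * ((((latSq v : ℤ) : ℝ) ^ d)⁻¹ - (((L : ℝ) ^ 2) ^ d)⁻¹)) (by
      rintro v ⟨hv1, hv2⟩
      rw [avg_sub, avg_const_mul, avg_sub, avg_const hd]
      have h1 := hsup v hv2
      have h2 := inv_latSq_pow_le_avg hd hv1.le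
      gcongr) (by
      have hout : ∀ v : Lat d,
          v ∉ {v : Lat d | 4 * ((d : ℤ) + 2) < latSq v ∧ latSq v < (L : ℤ) ^ 2} →
          0 ≤ g v - K * ((((latSq v : ℤ) : ℝ) ^ d)⁻¹ - (((L : ℝ) ^ 2) ^ d)⁻¹) := by
        intro v hv
        rcases le_or_gt (latSq v) (4 * ((d : ℤ) + 2)) with h | h
        · have h1 := hnear v h
          have h2 : (((latSq v : ℤ) : ℝ) ^ d)⁻¹ ≤ 1 := by
            rcases (latSq_nonneg v).eq_or_lt with h0 | h0
            · rw [← h0]; simp [hd.ne']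
            · refine inv_le_one_of_one_le₀ (one_le_pow₀ ?_)
              exact_mod_cast h0
          have h3 : 0 ≤ (((L : ℝ) ^ 2) ^ d)⁻¹ := by positivity
          have : K * ((((latSq v : ℤ) : ℝ) ^ d)⁻¹ - (((L : ℝ) ^ 2) ^ d)⁻¹) ≤ K * 1 := by
            gcongr; linarith
          linarith
        · have h1 : (L : ℤ) ^ 2 ≤ latSq v := by
            by_contra hlt
            exact hv ⟨h, by omega⟩
          have h2 : (L : ℝ) ^ 2 ≤ ((latSq v : ℤ) : ℝ) := by exact_mod_cast h1
          have h3 : (((latSq v : ℤ) : ℝ) ^ d)⁻¹ ≤ (((L : ℝ) ^ 2) ^ d)⁻¹ := by gcongr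
          have : K * ((((latSq v : ℤ) : ℝ) ^ d)⁻¹ - (((L : ℝ) ^ 2) ^ d)⁻¹) ≤ 0 :=
            mul_nonpos_of_nonneg_of_nonpos hK0 (by linarith)
          linarith [hg v]
      exact fun v _ i => ⟨hout _, hout _⟩) u ⟨hu1, by omega⟩
  have hu0 : (0 : ℝ) < ((latSq u : ℤ) : ℝ) := by
    have : 0 < latSq u := by omega
    exact_mod_cast this
  have h1 : 4 * (((L : ℝ) ^ 2) ^ d)⁻¹ ≤ (((latSq u : ℤ) : ℝ) ^ d)⁻¹ := by
    have h2 : ((latSq u : ℤ) : ℝ) ≤ (L : ℝ) ^ 2 / 4 := by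
      have : 4 * ((latSq u : ℤ) : ℝ) ≤ (L : ℝ) ^ 2 := by exact_mod_cast hu
      linarith
    have h3 : ((latSq u : ℤ) : ℝ) ^ d ≤ ((L : ℝ) ^ 2 / 4) ^ d := by gcongr
    have h4 : ((L : ℝ) ^ 2 / 4) ^ d ≤ ((L : ℝ) ^ 2) ^ d / 4 := by
      rw [div_pow]
      gcongr
      exact le_self_pow₀ (by norm_num) hd.ne'
    calc 4 * (((L : ℝ) ^ 2) ^ d)⁻¹ = (((L : ℝ) ^ 2) ^ d / 4)⁻¹ := by rw [inv_div]; rfl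
      _ ≤ _ := by
        gcongr
        exact h3.trans h4
  have h5 : K * (((L : ℝ) ^ 2) ^ d)⁻¹ ≤
      K * ((((latSq u : ℤ) : ℝ) ^ d)⁻¹ - (((L : ℝ) ^ 2) ^ d)⁻¹) := by
    gcongr
    have : 0 ≤ (((L : ℝ) ^ 2) ^ d)⁻¹ := by positivity
    linarith
  rw [pow_mul, div_eq_mul_inv]
  linarith

end lattice

/-! ### A lower bound on the quasistationary distribution -/

section lower_bound

variable {d N : ℕ}

/-- The projection from the lattice to the torus. -/
def latToTorus (N : ℕ) (u : Lat d) : Torus d N := fun i => (u i : ZMod N)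

lemma latToTorus_add (u v : Lat d) :
    latToTorus N (u + v) = latToTorus N u + latToTorus N v := by
  ext i; simp [latToTorus]

lemma latToTorus_neg (u : Lat d) : latToTorus N (-u) = -latToTorus N u := by
  ext i; simp [latToTorus]

lemma latToTorus_single (i : Fin d) :
    latToTorus N (Pi.single i 1 : Lat d) = (Pi.single i 1 : Torus d N) := by
  ext j
  by_cases hj : j = i
  · subst hj; simp [latToTorus]
  · simp [latToTorus, hj]

lemma avg_lift (f : Torus d N → ℝ) (z : Torus d N) (u : Lat d) :
    avg (fun v : Lat d => f (z + latToTorus N v)) u = avg f (z + latToTorus N u) := by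
  simp only [avg, sub_eq_add_neg, latToTorus_add, latToTorus_neg, latToTorus_single, add_assoc]

variable [NeZero N] {B : Set (Torus d N)} {σ : Torus d N → ℝ} {l : ℝ}

lemma torusDist_latToTorus_le {u : Lat d} {m : ℕ} (h : ∀ i, (u i).natAbs ≤ m) :
    torusDist 0 (latToTorus N u) ≤ m := torusDist_intCast_le h

lemma torusDist_le_add (z w : Torus d N) : torusDist 0 z ≤ torusDist 0 (z + w) + torusDist 0 w := by
  have := torusDist_add_le (z + w) (-w)
  rwa [add_neg_cancel_right, torusDist_neg] at this

lemma latNorm_le_torusDist {u : Lat d} (h : 2 * latNorm u < N) :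
    latNorm u ≤ torusDist 0 (latToTorus N u) := by
  rw [latNorm_le_iff]
  intro i
  refine le_trans (le_of_eq ?_) (natAbs_le_torusDist (latToTorus N u) i)
  have h1 := natAbs_le_latNorm u i
  rw [(ZMod.valMinAbs_spec (latToTorus N u i) (u i)).mpr ⟨rfl, by constructor <;> omega⟩]

lemma exists_lift (x : Torus d N) : ∃ u : Lat d, latToTorus N u = x ∧ latNorm u = torusDist 0 x := by
  refine ⟨fun i => (x i).valMinAbs, ?_, ?_⟩
  · ext i; simp [latToTorus]
  · rw [torusDist_zero_left]; rfl

lemma IsPrincipal.superharmonic (h : IsPrincipal B σ l) (hl : l ≤ 1) {x : Torus d N} (hx : x ∉ B) :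
    avg σ x ≤ σ x := by
  rw [h.avg_eq x hx]
  exact mul_le_of_le_one_left (h.nonneg x) hl

/-- Every box of macroscopic size contains a point at which `σ` is at least half of its mean. -/
lemma IsPrincipal.exists_half_mean_le (h : IsPrincipal B σ l) (hd : d ≠ 0) {δ : ℝ}
    (hδ0 : 0 ≤ δ) (hδ : (N : ℝ) ^ 2 * (1 - l) ≤ δ) {n : ℕ} (hn : n < N)
    (hsmall : 6 * ((d : ℝ) ^ 2 * δ) * N ^ d < (n + 1) ^ d) (x : Torus d N) :
    ∃ v : Fin d → ℕ, (∀ i, v i ≤ n) ∧ 1 / (2 * (N : ℝ) ^ d) ≤ σ (x + latToTorus N fun i => v i) := by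
  by_contra! hcon
  have hN : (0 : ℝ) < N := by exact_mod_cast Nat.pos_of_ne_zero (NeZero.ne N)
  have hnN : ((n : ℝ) + 1) ^ d ≤ N ^ d := by
    gcongr
    exact_mod_cast hn
  have hδ' : (d : ℝ) ^ 2 * δ ≤ 1 / 6 := by
    have h1 : 6 * ((d : ℝ) ^ 2 * δ) * N ^ d < 1 * N ^ d := by linarith
    have := lt_of_mul_lt_mul_right h1 (by positivity)
    linarith
  have h1 : ∑ y, σ y ^ 2 ≤ 4 / 3 / N ^ d := by
    refine h.sum_sq_le hd ?_
    have : (d : ℝ) ^ 2 * ((N : ℝ) ^ 2 * (1 - l)) ≤ d ^ 2 * δ := by gcongr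
    linarith
  have h2 := h.sum_sub_mean_sq_le hd hδ
  have h3 : (d : ℝ) ^ 2 * δ * ∑ y, σ y ^ 2 ≤ d ^ 2 * δ * (4 / 3 / N ^ d) := by gcongr
  set S : Finset (Fin d → ℕ) := Fintype.piFinset fun _ => Finset.range (n + 1) with hS
  have hmem : ∀ v ∈ S, ∀ i, v i ≤ n := by
    intro v hv i
    have := Fintype.mem_piFinset.mp hv i
    simp only [Finset.mem_range] at this
    omega
  have hinj : Set.InjOn (fun v : Fin d → ℕ => x + latToTorus N fun i => (v i : ℤ)) S := by
    intro v hv w hw hvw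
    have hvw' := add_left_cancel hvw
    ext i
    have h4 := congrFun hvw' i
    simp only [latToTorus, Int.cast_natCast] at h4
    rw [ZMod.natCast_eq_natCast_iff'] at h4
    rwa [Nat.mod_eq_of_lt (by have := hmem v hv i; omega),
      Nat.mod_eq_of_lt (by have := hmem w hw i; omega)] at h4
  have h4 : ∑ v ∈ S, (1 / (2 * (N : ℝ) ^ d)) ^ 2 ≤ ∑ y, (σ y - 1 / (N : ℝ) ^ d) ^ 2 := by
    refine le_trans ?_ (Finset.sum_le_sum_of_subset_of_nonneg
      (Finset.subset_univ (S.image fun v : Fin d → ℕ => x + latToTorus N fun i => (v i : ℤ)))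
      fun _ _ _ => sq_nonneg _)
    rw [Finset.sum_image hinj]
    refine Finset.sum_le_sum fun v hv => ?_
    have h5 := hcon v (hmem v hv)
    have h6 : (1 : ℝ) / N ^ d = 1 / (2 * N ^ d) + 1 / (2 * N ^ d) := by field_simp; ring
    have h7 : (0 : ℝ) < 1 / (2 * N ^ d) := by positivity
    rw [h6]
    nlinarith
  have hcard : (S.card : ℝ) = (n + 1) ^ d := by simp [hS]
  rw [Finset.sum_const, nsmul_eq_mul, hcard] at h4
  have h5 : ((n : ℝ) + 1) ^ d * (1 / (2 * (N : ℝ) ^ d)) ^ 2 ≤ d ^ 2 * δ * (4 / 3 / N ^ d) :=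
    h4.trans (h2.trans h3)
  have h6 : ((n : ℝ) + 1) ^ d * (1 / (2 * (N : ℝ) ^ d)) ^ 2 =
      ((n : ℝ) + 1) ^ d * (1 / (4 * ((N : ℝ) ^ d) ^ 2)) := by
    field_simp; norm_num
  have h7 : (d : ℝ) ^ 2 * δ * (4 / 3 / N ^ d) =
      (16 / 3 * (d ^ 2 * δ) * N ^ d) * (1 / (4 * ((N : ℝ) ^ d) ^ 2)) := by
    field_simp; norm_num
  rw [h6, h7] at h5
  have h8 := le_of_mul_le_mul_right h5 (by positivity)
  have : 0 ≤ (d : ℝ) ^ 2 * δ * N ^ d := by positivity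
  linarith

lemma IsPrincipal.le_of_far (h : IsPrincipal B σ l) (hd : 0 < d) (hl : l ≤ 1) {δ : ℝ}
    (hδ0 : 0 ≤ δ) (hδ : (N : ℝ) ^ 2 * (1 - l) ≤ δ) {n R : ℕ}
    (hn : 4 * (d + 2) < (2 * d * n) ^ 2) (hnN : 2 * d * n ≤ N) (hn' : n < N)
    (hsmall : 6 * ((d : ℝ) ^ 2 * δ) * N ^ d < (n + 1) ^ d)
    (hB : ∀ x ∈ B, torusDist 0 x ≤ R) {x : Torus d N}
    (hx : R + n + 2 * d * n < torusDist 0 x) :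
    1 / (2 * (2 * d) ^ (4 * (d + 2))) / (N : ℝ) ^ (3 * d) ≤ σ x := by
  have hN : (0 : ℝ) < N := by exact_mod_cast Nat.pos_of_ne_zero (NeZero.ne N)
  have hd' : (0 : ℝ) < d := by exact_mod_cast hd
  obtain ⟨v, hv, hvσ⟩ := h.exists_half_mean_le hd.ne' hδ0 hδ hn' hsmall x
  set z : Torus d N := x + latToTorus N fun i => (v i : ℤ) with hz
  have hzx : z + latToTorus N (-fun i => (v i : ℤ)) = x := by
    rw [latToTorus_neg, hz, add_neg_cancel_right]
  have hzD : torusDist 0 x ≤ torusDist 0 z + n :=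
    (torusDist_le_add x _).trans (add_le_add le_rfl (torusDist_latToTorus_le fun i => by
      simpa using hv i))
  have hsup : ∀ u : Lat d, latSq u < ((2 * d * n : ℕ) : ℤ) ^ 2 →
      avg (fun u : Lat d => σ (z + latToTorus N u)) u ≤ σ (z + latToTorus N u) := by
    intro u hu
    rw [avg_lift]
    refine h.superharmonic hl fun hmem => ?_
    have h1 := hB _ hmem
    have h2 : torusDist 0 (latToTorus N u) ≤ 2 * d * n := by
      refine torusDist_latToTorus_le fun i => ?_
      have h3 := abs_le_of_sq_le_sq ((sq_le_latSq u i).trans hu.le) (by positivity)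
      rw [Int.abs_eq_natAbs] at h3
      exact_mod_cast h3
    have h4 := torusDist_le_add z (latToTorus N u)
    omega
  have h1 := le_of_superharmonic_ball hd hn (fun u => h.nonneg (z + latToTorus N u)) hsup
    (u := -fun i => (v i : ℤ)) (by
      have h2 : latSq (-fun i => (v i : ℤ)) ≤ d * (n : ℤ) ^ 2 := by
        rw [latSq]
        calc ∑ i, ((-fun i => (v i : ℤ)) : Lat d) i ^ 2 ≤ ∑ _i : Fin d, (n : ℤ) ^ 2 := by
              refine Finset.sum_le_sum fun i _ => ?_
              simp only [Pi.neg_apply, neg_sq]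
              have := hv i
              gcongr
          _ = d * (n : ℤ) ^ 2 := by simp
      have h3 : (d : ℤ) * n ^ 2 ≤ d ^ 2 * n ^ 2 := by
        have : (1 : ℤ) ≤ d := by exact_mod_cast hd
        gcongr
        nlinarith
      push_cast
      nlinarith)
  rw [hzx] at h1
  refine le_trans ?_ h1
  have h0 : z + latToTorus N (0 : Lat d) = z := by
    have : latToTorus N (0 : Lat d) = 0 := by ext i; simp [latToTorus]
    rw [this, add_zero]
  rw [h0]
  calc 1 / (2 * (2 * d) ^ (4 * (d + 2))) / (N : ℝ) ^ (3 * d)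
      = 1 / (2 * (N : ℝ) ^ d) / (2 * d) ^ (4 * (d + 2)) / (N : ℝ) ^ (2 * d) := by
        rw [show 3 * d = d + 2 * d by ring, pow_add]
        field_simp
    _ ≤ σ z / (2 * d) ^ (4 * (d + 2)) / ((2 * d * n : ℕ) : ℝ) ^ (2 * d) := by
        have : (0 : ℝ) < ((2 * d * n : ℕ) : ℝ) := by
          rcases Nat.eq_zero_or_pos n with h0 | h0
          · subst h0; simp at hn
          · exact_mod_cast (by positivity : 0 < 2 * d * n)
        have h3 : ((2 * d * n : ℕ) : ℝ) ≤ N := by exact_mod_cast hnN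
        have h4 := h.nonneg z
        gcongr

/-- Polynomial lower bound on the quasistationary distribution. -/
lemma IsPrincipal.le_apply (h : IsPrincipal B σ l) (hd : 0 < d) (hl : l ≤ 1)
    (hδ : 6 * (d : ℝ) ^ 2 * (32 * d) ^ d * ((N : ℝ) ^ 2 * (1 - l)) < 1) {R : ℕ}
    (hN : 128 * d * (d + 2) ≤ N) (hR : 32 * R ≤ N)
    (hB : ∀ x, x ∈ B ↔ torusDist 0 x ≤ R) {x : Torus d N} (hx : x ∉ B) :
    1 / (2 * (2 * d) ^ (4 * (d + 2))) / (N : ℝ) ^ (3 * d + 1) ≤ σ x := by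
  have hN0 : 0 < N := Nat.pos_of_ne_zero (NeZero.ne N)
  have hN1 : (0 : ℝ) < N := by exact_mod_cast hN0
  have hN2 : (1 : ℝ) ≤ N := by exact_mod_cast hN0
  have hd' : (0 : ℝ) < d := by exact_mod_cast hd
  set n : ℕ := N / (32 * d) with hn
  have hn1 : 32 * d * n ≤ N := Nat.mul_div_le _ _
  have hn2 : N < 32 * d * (n + 1) := Nat.lt_mul_div_succ N (by positivity)
  have hn3 : 4 * (d + 2) ≤ n := by
    rw [hn, Nat.le_div_iff_mul_le (by positivity)]
    linarith
  have hdn : n ≤ d * n := Nat.le_mul_of_pos_left n hd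
  have hα : 0 ≤ (N : ℝ) ^ 2 * (1 - l) := mul_nonneg (by positivity) (by linarith)
  have hsmall : 6 * ((d : ℝ) ^ 2 * ((N : ℝ) ^ 2 * (1 - l))) * N ^ d < (n + 1) ^ d := by
    have h1 : (N : ℝ) ^ d ≤ (32 * d * (n + 1)) ^ d := by
      gcongr
      exact_mod_cast hn2.le
    rw [mul_pow] at h1
    calc 6 * ((d : ℝ) ^ 2 * ((N : ℝ) ^ 2 * (1 - l))) * N ^ d
        ≤ 6 * ((d : ℝ) ^ 2 * ((N : ℝ) ^ 2 * (1 - l))) * ((32 * d) ^ d * (n + 1) ^ d) := by gcongr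
      _ = (6 * (d : ℝ) ^ 2 * (32 * d) ^ d * ((N : ℝ) ^ 2 * (1 - l))) * (n + 1) ^ d := by ring
      _ < 1 * (n + 1) ^ d := by gcongr
      _ = _ := one_mul _
  set s : ℝ := 1 / (2 * (2 * d) ^ (4 * (d + 2))) / (N : ℝ) ^ (3 * d) with hs
  have hs0 : 0 < s := by positivity
  have hfar : ∀ y : Torus d N, N / 4 ≤ torusDist 0 y → s ≤ σ y := by
    intro y hy
    refine h.le_of_far hd hl hα le_rfl (n := n) (R := R) ?_ ?_ ?_ hsmall
      (fun x hx => (hB x).mp hx) ?_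
    · nlinarith
    · nlinarith
    · nlinarith
    · have e1 : 2 * d * n = 2 * (d * n) := by ring
      have e2 : 32 * d * n = 32 * (d * n) := by ring
      omega
  have hsN : 1 / (2 * (2 * d) ^ (4 * (d + 2))) / (N : ℝ) ^ (3 * d + 1) = s / N := by
    rw [hs, pow_succ, div_div _ ((N : ℝ) ^ (3 * d))]
  rw [hsN]
  rcases Nat.lt_or_ge (torusDist 0 x) (N / 4) with hlt | hge
  · obtain ⟨u, rfl, hu⟩ := exists_lift x
    have hm : 0 < N / 4 := by omega
    have h1 := le_of_superharmonic_annulus hd (g := fun u : Lat d => σ (latToTorus N u)) (R := R)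
      (m := N / 4) hs0.le hm (fun u => h.nonneg _) (fun v hv1 hv2 => by
        have e := avg_lift σ 0 v
        simp only [zero_add] at e
        rw [e]
        refine h.superharmonic hl fun hmem => ?_
        have h2 := latNorm_le_torusDist (N := N) (u := v) (by omega)
        have h3 := (hB _).mp hmem
        omega) (fun v hv => hfar _ (hv ▸ latNorm_le_torusDist (N := N) (by omega)))
      (u := u) (by rw [hB] at hx; omega) (by omega)
    refine le_trans ?_ h1
    have h2 : ((N / 4 : ℕ) : ℝ) ≤ N := by exact_mod_cast Nat.div_le_self N 4
    have h3 : (0 : ℝ) < ((N / 4 : ℕ) : ℝ) := by exact_mod_cast hm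
    gcongr
  · exact (div_le_self hs0.le hN2).trans (hfar x hge)

end lower_bound

/-! ### The killed continuous-time walk -/

section killed_walk

variable {d N : ℕ} {B : Set (Torus d N)}

lemma lt_hitT_iff {ω : CTPath d N} (hg : ∀ k, 0 < ω.2 k) (hhit : ∃ k, ω.1 k ∈ B) {t : ℝ} {n : ℕ}
    (h1 : ∑ k ∈ Finset.range n, ω.2 k ≤ t) (h2 : t < ∑ k ∈ Finset.range (n + 1), ω.2 k) :
    t < hitT B ω ↔ ∀ k ≤ n, ω.1 k ∉ B := by
  have hmono := sum_range_mono_of_pos hg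
  have hmem : ∀ k, ω.1 k ∈ B →
      ∑ j ∈ Finset.range k, ω.2 j ∈ {s | 0 ≤ s ∧ ctPos ω s ∈ B} := by
    intro k hk
    refine ⟨Finset.sum_nonneg fun j _ => (hg j).le, ?_⟩
    rw [ctPos, nJumps_eq hg le_rfl (hmono (Nat.lt_succ_self k))]
    exact hk
  constructor
  · intro ht k hk hkB
    have h3 : hitT B ω ≤ ∑ j ∈ Finset.range k, ω.2 j :=
      csInf_le ⟨0, fun s hs => hs.1⟩ (hmem k hkB)
    have h4 : ∑ j ∈ Finset.range k, ω.2 j ≤ ∑ j ∈ Finset.range n, ω.2 j := hmono.monotone hk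
    linarith
  · intro hk
    obtain ⟨k₀, hk₀⟩ := hhit
    refine h2.trans_le (le_csInf ⟨_, hmem k₀ hk₀⟩ fun s hs => ?_)
    by_contra! hlt
    exact hk _ (nJumps_le hg hlt) hs.2

variable [NeZero N] {σ : Torus d N → ℝ} {l : ℝ}

lemma IsPrincipal.tendsto_killHeat (h : IsPrincipal B σ l) (hd : d ≠ 0) (hB : B.Nonempty)
    (hδ : (d : ℝ) ^ 2 * ((N : ℝ) ^ 2 * (1 - l)) ≤ 1 / 4) {x : Torus d N} (hx : x ∉ B)
    (y : Torus d N) : Tendsto (fun t => killHeat B t x y) atTop (nhds 0) := by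
  have hN : (0 : ℝ) < N := by exact_mod_cast Nat.pos_of_ne_zero (NeZero.ne N)
  have hd' : (0 : ℝ) < d := by exact_mod_cast Nat.pos_of_ne_zero hd
  have hexp : ∀ {a : ℝ}, 0 < a → Tendsto (fun t : ℝ => Real.exp (-(a * t))) atTop (nhds 0) :=
    fun ha => Real.tendsto_exp_neg_atTop_nhds_zero.comp (tendsto_id.const_mul_atTop ha)
  have h1 : Tendsto (fun t => (σ x / ∑ z, σ z ^ 2) * Real.exp (-((1 - l) * t)) * σ y) atTop
      (nhds 0) := by
    have := ((hexp (sub_pos.mpr (h.eigenvalue_lt_one hd hB))).const_mul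
      (σ x / ∑ z, σ z ^ 2)).mul_const (σ y)
    simpa using this
  have h2 : Tendsto (fun t => killHeat B t x y -
      (σ x / ∑ z, σ z ^ 2) * Real.exp (-((1 - l) * t)) * σ y) atTop (nhds 0) := by
    refine squeeze_zero_norm' ?_ (hexp (show (0 : ℝ) < 1 / (2 * d ^ 2 * N ^ 2) by positivity))
    filter_upwards [eventually_ge_atTop 0] with t ht
    rw [Real.norm_eq_abs]
    exact h.abs_killHeat_sub_le hd hδ ht hx y
  simpa using h2.add h1

lemma measure_forall_notMem_le (hN : 3 ≤ N) {x : Torus d N} (hx : x ∉ B)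
    {μ : Measure (ℕ → Torus d N)} (hμ : IsWalkLaw μ (pointInit x)) (n : ℕ) :
    (μ {ω | ∀ k, ω k ∉ B}).toReal ≤ ∑ y, ((killOp B ^ n) (EuclideanSpace.single x 1)) y := by
  refine ENNReal.toReal_le_of_le_ofReal
    (Finset.sum_nonneg fun y _ => killOp_pow_nonneg B x n y) ?_
  rw [ENNReal.ofReal_sum_of_nonneg fun y _ => killOp_pow_nonneg B x n y]
  simp_rw [← measure_killed_walk hN hx hμ n]
  refine (measure_mono fun ω hω => ?_).trans (measure_iUnion_fintype_le μ _)
  simp only [Set.mem_iUnion]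
  exact ⟨ω n, fun k _ => hω k, rfl⟩

lemma IsPrincipal.measure_forall_notMem (h : IsPrincipal B σ l) (hd : d ≠ 0) (hB : B.Nonempty)
    (hδ : (d : ℝ) ^ 2 * ((N : ℝ) ^ 2 * (1 - l)) ≤ 1 / 4) (hN : 3 ≤ N) {x : Torus d N}
    (hx : x ∉ B) {μ : Measure (ℕ → Torus d N)} (hμ : IsWalkLaw μ (pointInit x)) :
    μ {ω | ∀ k, ω k ∉ B} = 0 := by
  have := hμ.1
  set a := (μ {ω | ∀ k, ω k ∉ B}).toReal with ha
  have h1 : ∀ t : ℝ, 0 ≤ t → a ≤ ∑ y, killHeat B t x y := by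
    intro t ht
    have h2 : HasSum (fun n => ∑ y, poissonWeight t n *
        ((killOp B ^ n) (EuclideanSpace.single x 1)) y) (∑ y, killHeat B t x y) :=
      hasSum_sum fun y _ => hasSum_killHeat B t x y
    have h3 := (hasSum_poissonWeight t).mul_right a
    rw [one_mul] at h3
    refine hasSum_le (fun n => ?_) h3 h2
    rw [← Finset.mul_sum]
    exact mul_le_mul_of_nonneg_left (measure_forall_notMem_le hN hx hμ n)
      (poissonWeight_nonneg ht n)
  have h2 : Tendsto (fun t => ∑ y, killHeat B t x y) atTop (nhds 0) := by
    have := tendsto_finsetSum (Finset.univ : Finset (Torus d N))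
      fun y _ => h.tendsto_killHeat hd hB hδ hx y
    simpa using this
  have h3 : a ≤ 0 := ge_of_tendsto h2 ((eventually_ge_atTop 0).mono h1)
  have h4 : a = 0 := le_antisymm h3 ENNReal.toReal_nonneg
  exact ((ENNReal.toReal_eq_zero_iff _).mp h4).resolve_right (measure_ne_top _ _)

lemma measurableSet_walk (B : Set (Torus d N)) (n : ℕ) (y : Torus d N) :
    MeasurableSet {ω : ℕ → Torus d N | (∀ k ≤ n, ω k ∉ B) ∧ ω n = y} := by
  have h : ∀ (k : ℕ) (S : Set (Torus d N)), MeasurableSet {ω : ℕ → Torus d N | ω k ∈ S} :=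
    fun k S => measurable_pi_apply k (Set.toFinite S).measurableSet
  have e : {ω : ℕ → Torus d N | (∀ k ≤ n, ω k ∉ B) ∧ ω n = y} =
      (⋂ k ∈ Set.Iic n, {ω | ω k ∈ Bᶜ}) ∩ {ω | ω n ∈ ({y} : Set (Torus d N))} := by
    ext ω; simp
  rw [e]
  exact (MeasurableSet.biInter (Set.to_countable _) fun k _ => h k _).inter (h n _)

lemma IsPrincipal.ctPos_event_ae_eq (h : IsPrincipal B σ l) (hd : d ≠ 0) (hB : B.Nonempty)
    (hδ : (d : ℝ) ^ 2 * ((N : ℝ) ^ 2 * (1 - l)) ≤ 1 / 4) (hN : 3 ≤ N) {x : Torus d N}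
    (hx : x ∉ B) {μ : Measure (ℕ → Torus d N)} (hμ : IsWalkLaw μ (pointInit x))
    {ν : Measure (ℕ → ℝ)} (hν : IsIIDExp ν) {t : ℝ} (ht : 0 ≤ t) (y : Torus d N) :
    {ω | ctPos ω t = y ∧ t < hitT B ω} =ᵐ[μ.prod ν]
      ⋃ n, {ω : ℕ → Torus d N | (∀ k ≤ n, ω k ∉ B) ∧ ω n = y} ×ˢ
        {g : ℕ → ℝ | ∑ k ∈ Finset.range n, g k ≤ t ∧ t < ∑ k ∈ Finset.range (n + 1), g k} := by
  have := hμ.1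
  have := hν.1
  have h1 : ∀ᵐ ω ∂μ, ∃ k, ω k ∈ B := by
    rw [ae_iff]
    simpa using h.measure_forall_notMem hd hB hδ hN hx hμ
  have h1' := (Measure.quasiMeasurePreserving_fst (μ := μ) (ν := ν)).ae h1
  have h2' := (Measure.quasiMeasurePreserving_snd (μ := μ) (ν := ν)).ae hν.ae_pos
  have h3' := (Measure.quasiMeasurePreserving_snd (μ := μ) (ν := ν)).ae (hν.ae_exists_jumps ht)
  rw [eventuallyEq_set]
  filter_upwards [h1', h2', h3'] with ω w1 w2 ⟨m, w3, w4⟩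
  simp only [Set.mem_ofPred_eq, Set.mem_iUnion, Set.mem_prod]
  rw [lt_hitT_iff w2 w1 w3 w4, ctPos, nJumps_eq w2 w3 w4]
  constructor
  · rintro ⟨a, b⟩
    exact ⟨m, ⟨b, a⟩, w3, w4⟩
  · rintro ⟨n, ⟨b, a⟩, c1, c2⟩
    have : n = m := (nJumps_eq w2 c1 c2).symm.trans (nJumps_eq w2 w3 w4)
    subst this
    exact ⟨a, b⟩

lemma IsPrincipal.nullMeasurableSet_ctPos_event (h : IsPrincipal B σ l) (hd : d ≠ 0) (hB : B.Nonempty)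
    (hδ : (d : ℝ) ^ 2 * ((N : ℝ) ^ 2 * (1 - l)) ≤ 1 / 4) (hN : 3 ≤ N) {x : Torus d N}
    (hx : x ∉ B) {μ : Measure (ℕ → Torus d N)} (hμ : IsWalkLaw μ (pointInit x))
    {ν : Measure (ℕ → ℝ)} (hν : IsIIDExp ν) {t : ℝ} (ht : 0 ≤ t) (y : Torus d N) :
    NullMeasurableSet {ω | ctPos ω t = y ∧ t < hitT B ω} (μ.prod ν) :=
  ((MeasurableSet.iUnion fun n => (measurableSet_walk B n y).prod
    (measurableSet_jumps n t)).nullMeasurableSet).congr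
      (h.ctPos_event_ae_eq hd hB hδ hN hx hμ hν ht y).symm

lemma IsPrincipal.measure_ctPos_event (h : IsPrincipal B σ l) (hd : d ≠ 0) (hB : B.Nonempty)
    (hδ : (d : ℝ) ^ 2 * ((N : ℝ) ^ 2 * (1 - l)) ≤ 1 / 4) (hN : 3 ≤ N) {x : Torus d N}
    (hx : x ∉ B) {μ : Measure (ℕ → Torus d N)} (hμ : IsWalkLaw μ (pointInit x))
    {ν : Measure (ℕ → ℝ)} (hν : IsIIDExp ν) {t : ℝ} (ht : 0 ≤ t) (y : Torus d N) :
    ((μ.prod ν) {ω | ctPos ω t = y ∧ t < hitT B ω}).toReal = killHeat B t x y := by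
  have := hμ.1
  have := hν.1
  rw [measure_congr (h.ctPos_event_ae_eq hd hB hδ hN hx hμ hν ht y), measure_iUnion₀]
  · simp_rw [Measure.prod_prod, measure_killed_walk hN hx hμ, hν.measure_jumps _ ht]
    have h1 : ∀ n, 0 ≤ poissonWeight t n * ((killOp B ^ n) (EuclideanSpace.single x 1)) y :=
      fun n => mul_nonneg (poissonWeight_nonneg ht n) (killOp_pow_nonneg B x n y)
    have h2 := hasSum_killHeat B t x y
    simp_rw [← ENNReal.ofReal_mul (killOp_pow_nonneg B x _ y), mul_comm _ (poissonWeight t _)]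
    rw [← ENNReal.ofReal_tsum_of_nonneg h1 h2.summable, h2.tsum_eq,
      ENNReal.toReal_ofReal (h2.nonneg h1)]
  · intro n m hnm
    have h2' := (Measure.quasiMeasurePreserving_snd (μ := μ) (ν := ν)).ae hν.ae_pos
    rw [Function.onFun, AEDisjoint]
    refine measure_mono_null (fun ω hω => ?_) (ae_iff.mp h2')
    intro w2
    exact hnm ((nJumps_eq w2 hω.1.2.1 hω.1.2.2).symm.trans (nJumps_eq w2 hω.2.2.1 hω.2.2.2))
  · exact fun n => ((measurableSet_walk B n y).prod (measurableSet_jumps n t)).nullMeasurableSet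

lemma IsPrincipal.measure_lt_hitT (h : IsPrincipal B σ l) (hd : d ≠ 0) (hB : B.Nonempty)
    (hδ : (d : ℝ) ^ 2 * ((N : ℝ) ^ 2 * (1 - l)) ≤ 1 / 4) (hN : 3 ≤ N) {x : Torus d N}
    (hx : x ∉ B) {μ : Measure (ℕ → Torus d N)} (hμ : IsWalkLaw μ (pointInit x))
    {ν : Measure (ℕ → ℝ)} (hν : IsIIDExp ν) {t : ℝ} (ht : 0 ≤ t) :
    ((μ.prod ν) {ω | t < hitT B ω}).toReal = ∑ y, killHeat B t x y := by
  have := hμ.1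
  have := hν.1
  have e : {ω : CTPath d N | t < hitT B ω} = ⋃ y, {ω | ctPos ω t = y ∧ t < hitT B ω} := by
    ext ω; simp
  rw [e, measure_iUnion₀, tsum_fintype, ENNReal.toReal_sum fun _ _ => measure_ne_top _ _]
  · exact Finset.sum_congr rfl fun y _ => h.measure_ctPos_event hd hB hδ hN hx hμ hν ht y
  · intro y y' hne
    refine Disjoint.aedisjoint ?_
    rw [Set.disjoint_left]
    rintro ω h1 h2
    exact hne (h1.1.symm.trans h2.1)
  · exact fun y => h.nullMeasurableSet_ctPos_event hd hB hδ hN hx hμ hν ht y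

end killed_walk

/-! ### Convergence of the conditioned walk -/

/-- Normalizing an approximate multiple of a probability vector. -/
lemma abs_div_sum_sub_le {ι : Type*} [Fintype ι] {p s : ι → ℝ} {A r : ℝ} (hs : ∀ y, 0 ≤ s y)
    (hs1 : ∑ y, s y = 1) (hA : 0 < A) (hp : ∀ y, |p y - A * s y| ≤ r)
    (hr : 2 * (Fintype.card ι * r) ≤ A) (y : ι) :
    |p y / ∑ z, p z - s y| ≤ 4 * (Fintype.card ι * r) / A := by
  have hr0 : 0 ≤ r := (abs_nonneg _).trans (hp y)
  have hcard : (1 : ℝ) ≤ Fintype.card ι := by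
    exact_mod_cast Fintype.card_pos_iff.mpr ⟨y⟩
  set n : ℝ := (Fintype.card ι : ℝ) with hn
  have hsum : |∑ z, p z - A| ≤ n * r := by
    have e : ∑ z, p z - A = ∑ z, (p z - A * s z) := by
      rw [Finset.sum_sub_distrib, ← Finset.mul_sum, hs1, mul_one]
    rw [e]
    refine (Finset.abs_sum_le_sum_abs _ _).trans ((Finset.sum_le_sum fun z _ => hp z).trans ?_)
    simp [hn]
  have hsy : s y ≤ 1 := hs1 ▸ Finset.single_le_sum (f := s) (fun z _ => hs z) (Finset.mem_univ y)
  have hpos : A / 2 ≤ ∑ z, p z := by linarith [(abs_le.mp hsum).1]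
  have hpos' : 0 < ∑ z, p z := by linarith
  have hnum : |p y - s y * ∑ z, p z| ≤ 2 * (n * r) := by
    have e : p y - s y * ∑ z, p z = (p y - A * s y) - s y * (∑ z, p z - A) := by ring
    rw [e]
    refine (abs_sub _ _).trans ?_
    rw [abs_mul, abs_of_nonneg (hs y)]
    have h1 : s y * |∑ z, p z - A| ≤ 1 * (n * r) :=
      mul_le_mul hsy hsum (abs_nonneg _) zero_le_one
    have h2 : r ≤ n * r := le_mul_of_one_le_left hr0 hcard
    linarith [hp y]
  have e : p y / ∑ z, p z - s y = (p y - s y * ∑ z, p z) / ∑ z, p z := by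
    field_simp
  rw [e, abs_div, abs_of_pos hpos']
  calc |p y - s y * ∑ z, p z| / ∑ z, p z ≤ 2 * (n * r) / (A / 2) := by gcongr
    _ = 4 * (n * r) / A := by field_simp; ring

/-- Gaussian-type decay in `log N` beats polynomial growth. -/
lemma eventually_mul_pow_le_exp_log_sq (K : ℝ) (n : ℕ) {a : ℝ} (ha : 0 < a) :
    ∀ᶠ N : ℕ in atTop, K * (N : ℝ) ^ n ≤ Real.exp (a * Real.log N ^ 2) := by
  have hlog : Tendsto (fun N : ℕ => Real.log N) atTop atTop :=
    Real.tendsto_log_atTop.comp tendsto_natCast_atTop_atTop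
  filter_upwards [hlog.eventually_ge_atTop (max 1 ((|K| + n) / a)), eventually_gt_atTop 0]
    with N h1 hN
  have hN' : (0 : ℝ) < N := by exact_mod_cast hN
  have h2 : 1 ≤ Real.log N := (le_max_left _ _).trans h1
  have h3 : |K| + n ≤ Real.log N * a := (div_le_iff₀ ha).mp ((le_max_right _ _).trans h1)
  have h4 : K ≤ Real.exp |K| := by
    have := Real.add_one_le_exp |K|
    linarith [le_abs_self K]
  calc K * (N : ℝ) ^ n ≤ Real.exp |K| * (N : ℝ) ^ n := by gcongr
    _ = Real.exp (|K| + n * Real.log N) := by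
      rw [Real.exp_add, ← Real.log_pow, Real.exp_log (by positivity)]
    _ ≤ Real.exp (a * Real.log N ^ 2) := by
      rw [Real.exp_le_exp]
      have h5 : (|K| + n) * Real.log N ≤ Real.log N * a * Real.log N := by gcongr
      have h6 : |K| * 1 ≤ |K| * Real.log N := by gcongr
      linarith

lemma eventually_floor_rpow_div_le {a η : ℝ} (ha : 0 < a) (hη : 0 < η) :
    ∀ᶠ N : ℕ in atTop, (⌊(N : ℝ) ^ (1 - a)⌋₊ : ℝ) / N ≤ η := by
  have h1 : Tendsto (fun N : ℕ => (N : ℝ) ^ (-a)) atTop (nhds 0) :=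
    (tendsto_rpow_neg_atTop ha).comp tendsto_natCast_atTop_atTop
  filter_upwards [h1.eventually_le_const hη, eventually_gt_atTop 0] with N h2 hN
  have hN' : (0 : ℝ) < N := by exact_mod_cast hN
  refine le_trans ?_ h2
  rw [div_le_iff₀ hN']
  refine (Nat.floor_le (by positivity)).trans (le_of_eq ?_)
  rw [sub_eq_add_neg, add_comm, Real.rpow_add hN', Real.rpow_one]

/-- Relaxation to the quasistationary distribution of the walk killed on a ball. -/
lemma IsPrincipal.abs_killHeat_div_sub_le {d N : ℕ} [NeZero N] {B : Set (Torus d N)}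
    {σ : Torus d N → ℝ} {l : ℝ} (h : IsPrincipal B σ l) (hd : 0 < d) (hl : l ≤ 1)
    (hδ : (N : ℝ) ^ 2 * (1 - l) ≤ 1 / (12 * d ^ 2 * (32 * d) ^ d)) {R : ℕ}
    (hN : 128 * d * (d + 2) ≤ N) (hR : 32 * R ≤ N)
    (hB : ∀ x, x ∈ B ↔ torusDist 0 x ≤ R)
    (hbig : 8 * (2 * d) ^ (4 * (d + 2)) * (N : ℝ) ^ (4 * d + 1) ≤
      Real.exp (1 / (4 * d ^ 2) * Real.log N ^ 2)) {x : Torus d N} (hx : x ∉ B)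
    (y : Torus d N) :
    |killHeat B (tstar N) x y / ∑ z, killHeat B (tstar N) x z - σ y| ≤
      Real.exp (-(1 / (8 * d ^ 2)) * Real.log N ^ 2) := by
  have hN0 : 0 < N := Nat.pos_of_ne_zero (NeZero.ne N)
  have hN1 : (0 : ℝ) < N := by exact_mod_cast hN0
  have hd' : (0 : ℝ) < d := by exact_mod_cast hd
  have hd1 : (1 : ℝ) ≤ d := by exact_mod_cast hd
  set α := (N : ℝ) ^ 2 * (1 - l) with hα
  have hα0 : 0 ≤ α := mul_nonneg (by positivity) (by linarith)
  have hα1 : 12 * (d : ℝ) ^ 2 * (32 * d) ^ d * α ≤ 1 := by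
    rw [le_div_iff₀ (by positivity)] at hδ
    linarith
  have hpow1 : (1 : ℝ) ≤ (32 * d) ^ d := one_le_pow₀ (by linarith)
  have hα2 : 12 * ((d : ℝ) ^ 2 * α) ≤ 1 := by
    refine le_trans ?_ hα1
    have : 12 * ((d : ℝ) ^ 2 * α) * 1 ≤ 12 * ((d : ℝ) ^ 2 * α) * (32 * d) ^ d := by gcongr
    linarith
  have hσ := h.le_apply hd hl (by rw [← hα]; linarith) hN hR hB hx
  set L := Real.log N with hL
  have ht : (0 : ℝ) ≤ tstar N := by rw [tstar]; positivity
  set r := Real.exp (-(1 / (2 * d ^ 2 * N ^ 2) * tstar N)) with hr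
  set S := ∑ z, σ z ^ 2 with hS
  set A := σ x / S * Real.exp (-((1 - l) * tstar N)) with hA
  have hr' : r = Real.exp (-(1 / (2 * d ^ 2) * L ^ 2)) := by
    rw [hr, tstar, ← hL]
    congr 1
    field_simp
  have hexpA : (1 - l) * tstar N = α * L ^ 2 := by rw [tstar, hα]; ring
  have hS0 : 0 < S := h.sum_sq_pos
  have hS1 : S ≤ 1 := by
    refine (h.sum_sq_le hd.ne' (by rw [← hα]; linarith)).trans ?_
    rw [div_le_one (by positivity)]
    have h2 : (2 : ℝ) ≤ N := by exact_mod_cast (by nlinarith : 2 ≤ N)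
    calc (4 / 3 : ℝ) ≤ N := by linarith
      _ ≤ N ^ d := le_self_pow₀ (by linarith) hd.ne'
  set Q : ℝ := 2 * (2 * d) ^ (4 * (d + 2)) with hQ
  have hQ0 : 0 < Q := by positivity
  have hσ0 : 0 < σ x := lt_of_lt_of_le (by positivity) hσ
  have hA1 : 1 / Q / (N : ℝ) ^ (3 * d + 1) * Real.exp (-(1 / (8 * d ^ 2) * L ^ 2)) ≤ A := by
    rw [hA, hexpA]
    have h1 : σ x ≤ σ x / S := le_div_self hσ0.le hS0 hS1
    have h2 : α ≤ 1 / (8 * d ^ 2) := by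
      rw [le_div_iff₀ (by positivity)]
      have : 0 ≤ (d : ℝ) ^ 2 * α := by positivity
      linarith
    have h3 := hσ.trans h1
    gcongr
  have hA0 : 0 < A := lt_of_lt_of_le (by positivity) hA1
  have hcard : (Fintype.card (Torus d N) : ℝ) = N ^ d := by
    rw [← Finset.card_univ, card_univ_torus]
  have hmain : 4 * ((N : ℝ) ^ d * r) / A ≤ Real.exp (-(1 / (8 * d ^ 2)) * L ^ 2) := by
    rw [div_le_iff₀ hA0]
    refine le_trans ?_ (mul_le_mul_of_nonneg_left hA1 (Real.exp_pos _).le)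
    have h1 : 4 * Q * (N : ℝ) ^ (4 * d + 1) * r ≤
        Real.exp (1 / (4 * d ^ 2) * L ^ 2) * r := by
      rw [hQ]
      refine mul_le_mul_of_nonneg_right (le_trans (le_of_eq (by ring)) hbig) (Real.exp_pos _).le
    have h2 : Real.exp (1 / (4 * d ^ 2) * L ^ 2) * r =
        Real.exp (-(1 / (8 * d ^ 2)) * L ^ 2) * Real.exp (-(1 / (8 * d ^ 2) * L ^ 2)) := by
      rw [hr', ← Real.exp_add, ← Real.exp_add]
      congr 1
      field_simp
      ring
    rw [h2] at h1
    have h3 : Real.exp (-(1 / (8 * d ^ 2)) * L ^ 2) *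
        (1 / Q / (N : ℝ) ^ (3 * d + 1) * Real.exp (-(1 / (8 * d ^ 2) * L ^ 2))) =
        Real.exp (-(1 / (8 * d ^ 2)) * L ^ 2) * Real.exp (-(1 / (8 * d ^ 2) * L ^ 2)) /
          (Q * (N : ℝ) ^ (3 * d + 1)) := by
      field_simp
    rw [h3, le_div_iff₀ (by positivity)]
    refine le_trans (le_of_eq ?_) h1
    rw [show 4 * d + 1 = d + (3 * d + 1) by ring, pow_add]
    ring
  have hsmall : 2 * ((N : ℝ) ^ d * r) ≤ A := by
    have h1 : Real.exp (-(1 / (8 * (d : ℝ) ^ 2)) * L ^ 2) ≤ 1 := by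
      rw [Real.exp_le_one_iff, neg_mul]
      have : 0 ≤ 1 / (8 * (d : ℝ) ^ 2) * L ^ 2 := by positivity
      linarith
    have h2 := (div_le_iff₀ hA0).mp (hmain.trans h1)
    have : 0 ≤ (N : ℝ) ^ d * r := by positivity
    linarith
  refine (abs_div_sum_sub_le (r := r) h.nonneg h.sum_eq hA0
    (fun z => h.abs_killHeat_sub_le hd.ne' (by rw [← hα]; linarith) ht hx z)
    (by rw [hcard]; exact hsmall) y).trans ?_
  rw [hcard]
  exact hmain

/-- **Lemma (convergence to the quasistationary distribution).**
With `B = B(0, N^{1−ε/2})` and `t_* = (N log N)²`, for all large `N`: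
`sup_{x,y ∉ B} | P_x[Y_{t_*} = y | H_B > t_*] − σ(y) | ≤ e^{−c (log N)²}`. -/
theorem quasistationary_convergence
    (d : ℕ) (hd : 3 ≤ d) (ε : ℝ) (hε : 0 < ε ∧ ε < 1) :
    ∃ c : ℝ, 0 < c ∧ ∃ N₀ : ℕ, ∀ N : ℕ, N₀ ≤ N →
      ∀ σ : Torus d N → ℝ,
        IsQSD d N (torusBall (0 : Torus d N) ((N : ℝ) ^ (1 - ε / 2))) σ →
        ∀ x y : Torus d N,
          x ∉ torusBall (0 : Torus d N) ((N : ℝ) ^ (1 - ε / 2)) →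
          y ∉ torusBall (0 : Torus d N) ((N : ℝ) ^ (1 - ε / 2)) →
          ∀ P : Measure (CTPath d N), IsCTWalk P (pointInit x) →
            |(P {ω | ctPos ω (tstar N) = y ∧
                  tstar N < hitT (torusBall (0 : Torus d N) ((N : ℝ) ^ (1 - ε / 2))) ω}).toReal /
                (P {ω | tstar N <
                  hitT (torusBall (0 : Torus d N) ((N : ℝ) ^ (1 - ε / 2))) ω}).toReal -
              σ y| ≤ Real.exp (-c * (Real.log N) ^ 2) := by
  have hd0 : 0 < d := by omega
  have hd' : (0 : ℝ) < d := by exact_mod_cast hd0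
  refine ⟨1 / (8 * d ^ 2), by positivity, ?_⟩
  set η : ℝ := 1 / (12 * d ^ 2 * (32 * d) ^ d) with hη
  have hη0 : 0 < η := by positivity
  have hη1 : d ^ 2 * η ≤ 1 / 4 := by
    have h1 : (1 : ℝ) ≤ (32 * d) ^ d := one_le_pow₀ (by
      have : (1 : ℝ) ≤ d := by exact_mod_cast hd0
      linarith)
    have h2 : d ^ 2 * η = 1 / (12 * (32 * d) ^ d) := by rw [hη]; field_simp
    rw [h2]
    gcongr
    linarith
  rw [← eventually_atTop]
  filter_upwards [eventually_ge_atTop (128 * d * (d + 2)),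
    eventually_floor_rpow_div_le (half_pos hε.1) (η := min (η / 125) (1 / 32)) (by positivity),
    eventually_mul_pow_le_exp_log_sq (8 * (2 * d) ^ (4 * (d + 2))) (4 * d + 1)
      (a := 1 / (4 * (d : ℝ) ^ 2)) (by positivity)] with N hN hfloor hbig σ hσ x y hx _ P hP
  have hN3 : 3 ≤ N := by nlinarith
  have hN1 : (0 : ℝ) < N := by exact_mod_cast (by omega : 0 < N)
  have : NeZero N := ⟨by omega⟩
  set R : ℕ := ⌊(N : ℝ) ^ (1 - ε / 2)⌋₊ with hR
  have hB : ∀ x, x ∈ torusBall (0 : Torus d N) ((N : ℝ) ^ (1 - ε / 2)) ↔ torusDist 0 x ≤ R := by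
    intro x
    rw [torusBall, Set.mem_ofPred_eq, hR, Nat.le_floor_iff (by positivity)]
  set B := torusBall (0 : Torus d N) ((N : ℝ) ^ (1 - ε / 2)) with hBdef
  have hR1 : 0 < R := by
    rw [hR, Nat.floor_pos]
    exact Real.one_le_rpow (by exact_mod_cast (by omega : 1 ≤ N)) (by linarith [hε.2])
  have hRN : 32 * R ≤ N := by
    have h1 := (div_le_iff₀ hN1).mp (hfloor.trans (min_le_right _ _))
    have h2 : 32 * (R : ℝ) ≤ N := by linarith
    exact_mod_cast h2
  obtain ⟨l, hl⟩ := hσ.isPrincipal hN3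
  have hBne : B.Nonempty := ⟨0, by rw [hB]; simp [torusDist]⟩
  have hl1 := hl.eigenvalue_lt_one hd0.ne' hBne
  have hα : (N : ℝ) ^ 2 * (1 - l) ≤ η := by
    have h1 := hl.sq_mul_one_sub_le hd hR1 (by omega) fun x hx => (hB x).mp hx
    linarith [hfloor.trans (min_le_left _ _)]
  have hδ : (d : ℝ) ^ 2 * ((N : ℝ) ^ 2 * (1 - l)) ≤ 1 / 4 :=
    (mul_le_mul_of_nonneg_left hα (by positivity)).trans hη1
  obtain ⟨μ, ν, hμ, hν, rfl⟩ := hP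
  have ht : (0 : ℝ) ≤ tstar N := by rw [tstar]; positivity
  rw [hl.measure_ctPos_event hd0.ne' hBne hδ hN3 hx hμ hν ht y,
    hl.measure_lt_hitT hd0.ne' hBne hδ hN3 hx hμ hν ht]
  exact hl.abs_killHeat_div_sub_le hd0 hl1.le hα hN hRN hB hbig hx y

end Frag
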